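/- Let σ ∈ (0,√2). There exist T > 2 large enough and a constant c > 0, both uniform (independent of s, t, ψ, g), such that: for any s < −T, any continuous g with finite C_Φ norm on (s,−T)×(0,∞), and any ψ with finite C_Φ norm on (s,−T)×(0,∞), there exists d(t) = (d_1(t),…,d_k(t)) solving the projection system for every t ∈ (s,−T); moreover, for every i = 1,…,k and t ∈ [s,−T]: |d_i(t)| ≤ c (log|t|/|t|)^{(√2+σ)/(2√2)} ‖ψ‖_{C_Φ((s,−T)×(0,∞))} + c (log|t|/|t|)^{σ/√2} ‖g‖_{C_Φ((s,−T)×(0,∞))}, and |d_i(t) w′(r − ρ_i(t))/Φ(t,r)| ≤ c (log|t|/|t|)^{1/2} ‖ψ‖_{C_Φ((s,−T)×(0,∞))} + c ‖g‖_{C_Φ((s,−T)×(0,∞))} for all r > 1. -/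

import Mathlib

open Real MeasureTheory

noncomputable section

/-- The heteroclinic profile `w(s) = tanh(s/√2)`. -/
def w (s : ℝ) : ℝ := Real.tanh (s / Real.sqrt 2)

/-- `w' `. -/
def w1 (s : ℝ) : ℝ := deriv w s

/-- `w''`. -/
def w2 (s : ℝ) : ℝ := deriv w1 s

/-- The Allen–Cahn nonlinearity `f(v) = v(1-v²)`. -/
def f (v : ℝ) : ℝ := v * (1 - v ^ 2)

/-- `f'`. -/
def f1 (v : ℝ) : ℝ := deriv f v

/-- The interaction constant `β`. -/
def β : ℝ :=
  (6 * ∫ x : ℝ, Real.exp (Real.sqrt 2 * x) * (1 - w x ^ 2) * w1 x) / ∫ x : ℝ, w1 x ^ 2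

/-- `r(y) = (1+y²)^{1/(2(N-1))}`. -/
def Rr (N : ℕ) (y : ℝ) : ℝ := (1 + y ^ 2) ^ ((1 : ℝ) / (2 * ((N : ℝ) - 1)))

/-- `b_l = -(1/√2) log((k-l)l/(2β))`. -/
def bco (k l : ℕ) : ℝ :=
  -(1 / Real.sqrt 2) * Real.log (((k : ℝ) - (l : ℝ)) * (l : ℝ) / (2 * β))

/-- `ρ⁰_j(t) = √(-2(N-1)t) + (j-(k+1)/2) η(t) + γ_j`. -/
def rho0 (N k : ℕ) (η : ℝ → ℝ) (γ : ℕ → ℝ) (j : ℕ) (t : ℝ) : ℝ :=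
  Real.sqrt (-2 * ((N : ℝ) - 1) * t) + ((j : ℝ) - ((k : ℝ) + 1) / 2) * η t + γ j

/-- `ρ_j = ρ⁰_j + h_j`. -/
def rho (N k : ℕ) (η : ℝ → ℝ) (γ : ℕ → ℝ) (h : ℕ → ℝ → ℝ) (j : ℕ) (t : ℝ) : ℝ :=
  rho0 N k η γ j t + h j t

/-- `z(t,r) = ∑_{j=1}^k (-1)^{j+1} w(r-ρ_j(t)) - 1`. -/
def zfun (N k : ℕ) (η : ℝ → ℝ) (γ : ℕ → ℝ) (h : ℕ → ℝ → ℝ) (t r : ℝ) : ℝ :=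
  (∑ j ∈ Finset.Icc 1 k, (-1 : ℝ) ^ (j + 1) * w (r - rho N k η γ h j t)) - 1

/-- The standing assumptions: `N ≥ 2`, `k ≥ 2` even, `η` solves the simple ODE with `η(-1)=0`,
and `γ` is defined through the constants `b_l`. -/
structure Setting (N k : ℕ) (η : ℝ → ℝ) (γ : ℕ → ℝ) : Prop where
  hN : 2 ≤ N
  hk : 2 ≤ k
  hkeven : Even k
  hηdiff : ∀ t ≤ (-1 : ℝ), DifferentiableAt ℝ η t
  hηode : ∀ t ≤ (-1 : ℝ),
    deriv η t + η t / (2 * t) + β * Real.exp (-Real.sqrt 2 * η t) = 0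
  hηinit : η (-1) = 0
  hγ : ∀ j : ℕ, 1 ≤ j → j ≤ k / 2 →
    γ j = -(1 / 2) * (∑ i ∈ Finset.Icc j (k - j), bco k i) ∧
    γ (k - j + 1) = (1 / 2) * (∑ i ∈ Finset.Icc j (k - j), bco k i)

/-- `h = (h_1,…,h_k)` is C¹ on `(-∞,-T]` with
`sup_{t≤-T}|h(t)| + sup_{t≤-T}(|t|/log|t|)|h'(t)| < 1`. -/
def SmallH (k : ℕ) (T : ℝ) (h : ℕ → ℝ → ℝ) : Prop :=
  (∀ j ∈ Finset.Icc 1 k, ∀ t ≤ -T, DifferentiableAt ℝ (h j) t) ∧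
  ∃ A B : ℝ, A + B < 1 ∧
    (∀ j ∈ Finset.Icc 1 k, ∀ t ≤ -T, |h j t| ≤ A) ∧
    (∀ j ∈ Finset.Icc 1 k, ∀ t ≤ -T, |t| / Real.log |t| * |deriv (h j) t| ≤ B)

/-- The weight `Φ(t,r)`, defined piecewise (with the convention `ρ⁰_{k+1} = +∞`). -/
def IsPhi (N k : ℕ) (η : ℝ → ℝ) (γ : ℕ → ℝ) (σ : ℝ) (Φ : ℝ → ℝ → ℝ) : Prop :=
  (∀ t r : ℝ, 1 < r → r ≤ (rho0 N k η γ 1 t + rho0 N k η γ 2 t) / 2 →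
      Φ t r = Real.exp (σ * (r - rho0 N k η γ 2 t))) ∧
  (∀ t r : ℝ, ∀ j : ℕ, 2 ≤ j → j < k →
      (rho0 N k η γ j t + rho0 N k η γ (j - 1) t) / 2 < r →
      r ≤ (rho0 N k η γ j t + rho0 N k η γ (j + 1) t) / 2 →
      Φ t r = Real.exp (σ * (-r + rho0 N k η γ (j - 1) t)) +
        Real.exp (σ * (r - rho0 N k η γ (j + 1) t))) ∧
  (∀ t r : ℝ, (rho0 N k η γ k t + rho0 N k η γ (k - 1) t) / 2 < r →
      Φ t r = Real.exp (σ * (-r + rho0 N k η γ (k - 1) t)))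

/-- The error term `E`. -/
def Eterm (N k : ℕ) (η : ℝ → ℝ) (γ : ℕ → ℝ) (h : ℕ → ℝ → ℝ) (t y : ℝ) : ℝ :=
  (∑ i ∈ Finset.Icc 1 k, (-1 : ℝ) ^ (i + 1) *
    (w1 (Rr N y - rho N k η γ h i t) * (deriv (rho N k η γ h i) t + ((N : ℝ) - 1) / Rr N y)
      - f (w (Rr N y - rho N k η γ h i t))
      - w2 (Rr N y - rho N k η γ h i t) / (1 + y ^ 2))) +
  f (zfun N k η γ h t (Rr N y))

/-- The set of values `|u|/Φ` over `I × (0,∞)`. -/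
def CSet (N : ℕ) (Φ : ℝ → ℝ → ℝ) (I : Set ℝ) (u : ℝ → ℝ → ℝ) : Set ℝ :=
  (fun p : ℝ × ℝ => |u p.1 p.2| / Φ p.1 (Rr N p.2)) '' (I ×ˢ Set.Ioi (0 : ℝ))

/-- The norm `‖u‖_{C_Φ(I×(0,∞))}`. -/
def CNorm (N : ℕ) (Φ : ℝ → ℝ → ℝ) (I : Set ℝ) (u : ℝ → ℝ → ℝ) : ℝ :=
  sSup (CSet N Φ I u)

/-- The divergence form elliptic operator `L`. -/
def Lop (N : ℕ) (v : ℝ → ℝ → ℝ) (t y : ℝ) : ℝ :=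
  ((N : ℝ) - 1) ^ 2 * (y ^ 2 + 1) ^ (-(1 : ℝ) / (2 * ((N : ℝ) - 1))) *
    deriv (fun s => (s ^ 2 + 1) ^ ((2 * (N : ℝ) - 3) / (2 * ((N : ℝ) - 1))) * deriv (v t) s) y

/-- `d = (d_1,…,d_k)` solves, at time `t`, the (nearly diagonal) projection system associated to
`ψ`, the profile locations `ρ`, the profile `z` and the forcing `g`. -/
def ProjSystem (N k : ℕ) (ρ : ℕ → ℝ → ℝ) (z : ℝ → ℝ → ℝ) (ψ g : ℝ → ℝ → ℝ)
    (d : ℕ → ℝ → ℝ) (t : ℝ) : Prop :=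
  ∀ j ∈ Finset.Icc 1 k,
    (∑ i ∈ Finset.Icc 1 k, d i t * ∫ y in Set.Ioi (0 : ℝ),
        w1 (Rr N y - ρ i t) * w1 (Rr N y - ρ j t) * Rr N y) =
      -deriv (ρ j) t * (∫ y in Set.Ioi (0 : ℝ), ψ t y * w2 (Rr N y - ρ j t) * Rr N y) +
      ((N : ℝ) - 1) *
        (∫ y in Set.Ioi (0 : ℝ), ψ t y * deriv (fun s => w2 (Rr N s - ρ j t) * s) y) +
      (∫ y in Set.Ioi (0 : ℝ), f1 (z t (Rr N y)) * ψ t y * w1 (Rr N y - ρ j t) * Rr N y) +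
      (∫ y in Set.Ioi (0 : ℝ), g t y * w1 (Rr N y - ρ j t) * Rr N y)

/-- The orthogonality conditions at time `t`. -/
def Orth (N k : ℕ) (ρ : ℕ → ℝ → ℝ) (ψ : ℝ → ℝ → ℝ) (t : ℝ) : Prop :=
  ∀ i ∈ Finset.Icc 1 k, (∫ y in Set.Ioi (0 : ℝ), ψ t y * w1 (Rr N y - ρ i t) * Rr N y) = 0

/-- The nonlinear term `N(ψ,h)`. -/
def Nterm (N k : ℕ) (η : ℝ → ℝ) (γ : ℕ → ℝ) (h : ℕ → ℝ → ℝ) (ψ : ℝ → ℝ → ℝ) (t y : ℝ) : ℝ :=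
  f (zfun N k η γ h t (Rr N y) + ψ t y) - f (zfun N k η γ h t (Rr N y)) -
    f1 (zfun N k η γ h t (Rr N y)) * ψ t y

/-- The norm `‖h‖_Λ = sup_{t≤-T}|h(t)| + sup_{t≤-T}(|t|/log|t|)|h'(t)|`
(with the sup norm on vectors). -/
def LamNorm (k : ℕ) (T : ℝ) (h : ℕ → ℝ → ℝ) : ℝ :=
  sSup {a : ℝ | ∃ j ∈ Finset.Icc 1 k, ∃ t ≤ -T, a = |h j t|} +
  sSup {a : ℝ | ∃ j ∈ Finset.Icc 1 k, ∃ t ≤ -T, a = |t| / Real.log |t| * |deriv (h j) t|}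

end

/-!
At a fixed time the projection system is a `k × k` linear system. Its matrix is strictly diagonally
dominant: consecutive interfaces are `η(t) + O(1)` apart, so an off-diagonal entry is smaller than
the diagonal one by a factor `e^{-(√2/2)η}`. On the right-hand side the two large terms in `ψ`
nearly cancel, because `w′` is in the kernel of the linearization at a single interface,
`w‴ + f′(w) w′ = 0`. What remains is of relative size `e^{-(√2/2)η} + 1/ρ_j + |ρ_j′|`. The weight
`Φ` is `O(e^{-ση})` at the interfaces and at most `O(e^{-ση} e^{σ|x|})` at distance `x` from them,
which is integrable against `w′ ~ e^{-√2|x|}` as `σ < √2`. Finally, a comparison argument for the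
equation of `η` gives that `e^{-√2η}` is of order `log|t|/|t|`, so that all the errors are
`O((log|t|/|t|)^{1/2})`.
-/

open Filter Asymptotics Topology

/-! ### The heteroclinic profile -/

theorem sq_sqrt_two : (√2 : ℝ) ^ 2 = 2 := Real.sq_sqrt (by norm_num)

theorem one_le_sqrt_two : (1 : ℝ) ≤ √2 := Real.one_le_sqrt.mpr (by norm_num)

theorem sqrt_two_le_two : (√2 : ℝ) ≤ 2 := Real.sqrt_le_iff.mpr (by norm_num)

theorem w_eq (s : ℝ) : w s = 1 - 2 / (exp (√2 * s) + 1) := by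
  have hs : s / √2 + s / √2 = √2 * s := by
    field_simp
    linear_combination (-s) * sq_sqrt_two
  have h1 : exp (√2 * s) = exp (s / √2) * exp (s / √2) := by rw [← exp_add, hs]
  have := exp_pos (s / √2)
  rw [w, Real.tanh_eq, h1, exp_neg]
  field_simp
  ring

theorem hasDerivAt_w_sq (s : ℝ) : HasDerivAt w ((1 - w s ^ 2) / √2) s := by
  have hE : HasDerivAt (fun s : ℝ => exp (√2 * s) + 1) (exp (√2 * s) * (√2 * 1)) s :=
    (((hasDerivAt_id s).const_mul √2).exp).add_const 1
  have := exp_pos (√2 * s)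
  rw [w_eq s, funext w_eq]
  refine (((hasDerivAt_const s (2 : ℝ)).div hE (by positivity)).const_sub 1).congr_deriv ?_
  field_simp
  linear_combination (2 * exp (√2 * s)) * sq_sqrt_two

theorem w1_eq (s : ℝ) : w1 s = (1 - w s ^ 2) / √2 := (hasDerivAt_w_sq s).deriv

theorem one_sub_w_sq (s : ℝ) : 1 - w s ^ 2 = √2 * w1 s := by
  rw [w1_eq]
  field_simp

theorem hasDerivAt_w (s : ℝ) : HasDerivAt w (w1 s) s := w1_eq s ▸ hasDerivAt_w_sq s

theorem hasDerivAt_w1 (s : ℝ) : HasDerivAt w1 (-√2 * w s * w1 s) s := by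
  have h := ((((hasDerivAt_w s).pow 2).const_sub 1).div_const √2).congr_of_eventuallyEq
    (.of_forall w1_eq)
  refine h.congr_deriv ?_
  field_simp
  push_cast
  linear_combination (w s * w1 s) * sq_sqrt_two

theorem w2_eq (s : ℝ) : w2 s = -√2 * w s * w1 s := (hasDerivAt_w1 s).deriv

theorem f1_eq (v : ℝ) : f1 v = 1 - 3 * v ^ 2 := by
  have h : HasDerivAt f (1 * (1 - v ^ 2) + v * (-(2 * v))) v :=
    HasDerivAt.congr_deriv (f := f)
      ((hasDerivAt_id v).mul (((hasDerivAt_id v).pow 2).const_sub 1)) (by simp)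
  rw [f1, h.deriv]
  ring

theorem hasDerivAt_w2 (s : ℝ) : HasDerivAt w2 (-(f1 (w s) * w1 s)) s := by
  rw [funext w2_eq]
  refine (((hasDerivAt_w s).const_mul (-√2)).mul (hasDerivAt_w1 s)).congr_deriv ?_
  rw [f1_eq]
  linear_combination (w1 s) * one_sub_w_sq s + (w s ^ 2 * w1 s) * sq_sqrt_two

theorem abs_w_le_one (s : ℝ) : |w s| ≤ 1 := (Real.abs_tanh_lt_one _).le

theorem abs_f1_le_two {v : ℝ} (hv : |v| ≤ 1) : |f1 v| ≤ 2 := by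
  have : v ^ 2 ≤ 1 := (sq_le_one_iff_abs_le_one v).mpr hv
  rw [f1_eq, abs_le]
  constructor <;> nlinarith [sq_nonneg v]

theorem w_neg (s : ℝ) : w (-s) = -w s := by rw [w, w, neg_div, Real.tanh_neg]

theorem abs_w_sub_one_le (s : ℝ) : |w s - 1| ≤ 2 * exp (-√2 * s) := by
  have := exp_pos (√2 * s)
  rw [w_eq, sub_sub_cancel_left, abs_neg, abs_of_pos (by positivity), neg_mul, exp_neg,
    div_eq_mul_inv]
  gcongr
  linarith

theorem abs_w_add_one_le (s : ℝ) : |w s + 1| ≤ 2 * exp (√2 * s) := by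
  have h := abs_w_sub_one_le (-s)
  rwa [w_neg, ← neg_add', abs_neg, neg_mul_neg] at h

theorem w_nonpos {s : ℝ} (hs : s ≤ 0) : w s ≤ 0 := by
  have h := exp_le_one_iff.mpr (mul_nonpos_of_nonneg_of_nonpos (Real.sqrt_nonneg 2) hs)
  have := exp_pos (√2 * s)
  rw [w_eq, sub_nonpos, le_div_iff₀ (by positivity)]
  linarith

theorem w1_eq_exp (s : ℝ) : w1 s = 2 * √2 * exp (√2 * s) / (exp (√2 * s) + 1) ^ 2 := by
  have := exp_pos (√2 * s)
  rw [w1_eq, w_eq]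
  field_simp
  linear_combination (-2 * exp (√2 * s)) * sq_sqrt_two

theorem w1_pos (s : ℝ) : 0 < w1 s := by
  rw [w1_eq_exp]
  positivity

theorem w1_neg (s : ℝ) : w1 (-s) = w1 s := by rw [w1_eq, w1_eq, w_neg, neg_sq]

theorem w1_abs (s : ℝ) : w1 |s| = w1 s := by
  rcases abs_choice s with h | h <;> simp only [h, w1_neg]

theorem w1_le (s : ℝ) : w1 s ≤ 4 * exp (-√2 * |s|) := by
  have := exp_pos (√2 * |s|)
  have := sqrt_two_le_two
  rw [← w1_abs, w1_eq_exp, neg_mul, exp_neg, div_le_iff₀ (by positivity)]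
  field_simp
  nlinarith

theorem le_w1 (s : ℝ) : 1 / 2 * exp (-√2 * |s|) ≤ w1 s := by
  have h : 1 ≤ exp (√2 * |s|) := one_le_exp (by positivity)
  have := one_le_sqrt_two
  rw [← w1_abs, w1_eq_exp, neg_mul, exp_neg, le_div_iff₀ (by positivity)]
  field_simp
  nlinarith

theorem w1_le_one (s : ℝ) : w1 s ≤ 1 := by
  rw [w1_eq, div_le_one (by positivity)]
  linarith [sq_nonneg (w s), one_le_sqrt_two]

theorem abs_w2_le (s : ℝ) : |w2 s| ≤ 8 * exp (-√2 * |s|) := by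
  rw [w2_eq, abs_mul, abs_mul, abs_neg, abs_of_pos (w1_pos s), abs_of_nonneg (Real.sqrt_nonneg 2)]
  calc √2 * |w s| * w1 s ≤ 2 * 1 * (4 * exp (-√2 * |s|)) := by
        have := w1_pos s
        gcongr
        exacts [sqrt_two_le_two, abs_w_le_one s, w1_le s]
    _ = 8 * exp (-√2 * |s|) := by ring

theorem analyticAt_w (s : ℝ) : AnalyticAt ℝ w s := by
  have := exp_pos (√2 * s)
  rw [funext w_eq]
  fun_prop (disch := positivity)

theorem analyticAt_w1 (s : ℝ) : AnalyticAt ℝ w1 s := (analyticAt_w s).deriv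

theorem analyticAt_w2 (s : ℝ) : AnalyticAt ℝ w2 s := (analyticAt_w1 s).deriv

theorem continuous_w1 : Continuous w1 :=
  continuous_iff_continuousAt.mpr fun s => (analyticAt_w1 s).continuousAt

theorem tendsto_w_atTop : Tendsto w atTop (𝓝 1) := by
  have h : Tendsto (fun s : ℝ => exp (√2 * s) + 1) atTop atTop :=
    tendsto_atTop_add_const_right _ _
      (tendsto_exp_atTop.comp (tendsto_id.const_mul_atTop (by positivity)))
  rw [funext w_eq]
  simpa using (h.const_div_atTop 2).const_sub 1

/-! ### The interaction constant -/

theorem integrable_exp_neg_mul_abs {a : ℝ} (ha : 0 < a) :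
    Integrable fun x : ℝ => exp (-a * |x|) := by
  rw [← integrableOn_univ, ← Set.Iic_union_Ioi (a := (0 : ℝ))]
  refine IntegrableOn.union ?_ ?_
  · refine (integrableOn_exp_mul_Iic ha 0).congr_fun (fun x hx => ?_) measurableSet_Iic
    simp only [abs_of_nonpos (show x ≤ 0 from hx), neg_mul_neg]
  · refine (integrableOn_exp_mul_Ioi (neg_lt_zero.mpr ha) 0).congr_fun (fun x hx => ?_)
      measurableSet_Ioi
    simp only [abs_of_pos (show 0 < x from hx)]

theorem integrable_w1 : Integrable w1 :=
  ((integrable_exp_neg_mul_abs (a := √2) (by positivity)).const_mul 4).mono'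
    continuous_w1.aestronglyMeasurable (.of_forall fun x => by
      rw [Real.norm_of_nonneg (w1_pos x).le]
      exact w1_le x)

theorem exp_mul_w1_le (x : ℝ) : exp (√2 * x) * w1 x ≤ 4 := by
  calc exp (√2 * x) * w1 x ≤ exp (√2 * |x|) * (4 * exp (-√2 * |x|)) := by
        have := w1_pos x
        gcongr
        exacts [le_abs_self x, w1_le x]
    _ = 4 := by
        rw [mul_left_comm, ← exp_add]
        simp

theorem beta_pos : 0 < β := by
  have hc := continuous_w1
  have int_num : Integrable fun x : ℝ => exp (√2 * x) * (√2 * w1 x) * w1 x := by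
    refine integrable_w1.bdd_mul (c := √2 * 4) (by fun_prop) (.of_forall fun x => ?_)
    have := w1_pos x
    rw [Real.norm_of_nonneg (by positivity), mul_left_comm]
    gcongr
    exact exp_mul_w1_le x
  have int_den : Integrable fun x : ℝ => w1 x ^ 2 := by
    simp only [sq]
    refine integrable_w1.bdd_mul (c := 1) (by fun_prop) (.of_forall fun x => ?_)
    rw [Real.norm_of_nonneg (w1_pos x).le]
    exact w1_le_one x
  have hw := w1_pos
  have num_pos : 0 < ∫ x : ℝ, exp (√2 * x) * (√2 * w1 x) * w1 x :=
    integral_pos_of_integrable_nonneg_nonzero (x := 0) (by fun_prop) int_num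
      (fun x => by have := hw x; simp only [Pi.zero_apply]; positivity)
      (by have := hw 0; positivity)
  have den_pos : 0 < ∫ x : ℝ, w1 x ^ 2 :=
    integral_pos_of_integrable_nonneg_nonzero (x := 0) (by fun_prop) int_den
      (fun x => sq_nonneg _) (by have := hw 0; positivity)
  simp only [β, one_sub_w_sq]
  positivity

/-! ### The change of variables `y ↦ r(y)` -/

theorem sub_one_pos_of_two_le {N : ℕ} (hN : 2 ≤ N) : (0 : ℝ) < (N : ℝ) - 1 := by
  have : (2 : ℝ) ≤ N := by exact_mod_cast hN
  linarith

theorem Rr_pos (N : ℕ) (y : ℝ) : 0 < Rr N y := by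
  unfold Rr
  positivity

theorem Rr_zero (N : ℕ) : Rr N 0 = 1 := by simp [Rr]

theorem hasDerivAt_Rr (N : ℕ) (y : ℝ) :
    HasDerivAt (Rr N) (y * Rr N y / (((N : ℝ) - 1) * (1 + y ^ 2))) y := by
  have h0 : (0 : ℝ) < 1 + y ^ 2 := by positivity
  have h1 : HasDerivAt (fun y : ℝ => 1 + y ^ 2) (2 * y) y := by
    simpa using (hasDerivAt_pow 2 y).const_add 1
  refine HasDerivAt.congr_deriv (f := Rr N) (h1.rpow_const (Or.inl h0.ne')) ?_
  rw [Real.rpow_sub_one h0.ne']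
  rcases eq_or_ne ((N : ℝ) - 1) 0 with h | h
  · simp [h]
  · unfold Rr
    field_simp

theorem deriv_Rr (N : ℕ) (y : ℝ) :
    deriv (Rr N) y = y * Rr N y / (((N : ℝ) - 1) * (1 + y ^ 2)) :=
  (hasDerivAt_Rr N y).deriv

theorem analyticAt_Rr (N : ℕ) (y : ℝ) : AnalyticAt ℝ (Rr N) y := by
  have h0 : (0 : ℝ) < 1 + y ^ 2 := by positivity
  have h1 : Rr N = fun y : ℝ => exp (log (1 + y ^ 2) * (1 / (2 * ((N : ℝ) - 1)))) :=
    funext fun y => Real.rpow_def_of_pos (by positivity) _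
  rw [h1]
  exact (((analyticAt_const.add (analyticAt_id.pow 2)).log h0).mul analyticAt_const).rexp

theorem continuous_Rr (N : ℕ) : Continuous (Rr N) :=
  continuous_iff_continuousAt.mpr fun y => (analyticAt_Rr N y).continuousAt

section

variable {N : ℕ} (hN : 2 ≤ N)
include hN

theorem Rr_pow_sq (y : ℝ) : (Rr N y ^ (N - 1)) ^ 2 = 1 + y ^ 2 := by
  have hM := sub_one_pos_of_two_le hN
  have h : 1 / (2 * ((N : ℝ) - 1)) * (((N : ℝ) - (1 : ℕ)) * (2 : ℕ)) = 1 := by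
    push_cast
    field_simp
  rw [Rr, ← pow_mul, ← Real.rpow_natCast, ← Real.rpow_mul (by positivity), Nat.cast_mul,
    Nat.cast_sub (by omega : 1 ≤ N), h, Real.rpow_one]

theorem one_le_Rr (y : ℝ) : 1 ≤ Rr N y := by
  have := sub_one_pos_of_two_le hN
  exact Real.one_le_rpow (by nlinarith [sq_nonneg y]) (by positivity)

theorem one_lt_Rr {y : ℝ} (hy : 0 < y) : 1 < Rr N y := by
  have := sub_one_pos_of_two_le hN
  exact Real.one_lt_rpow (by nlinarith) (by positivity)

theorem tendsto_Rr_atTop : Tendsto (Rr N) atTop atTop := by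
  have := sub_one_pos_of_two_le hN
  have h : Tendsto (fun y : ℝ => 1 + y ^ 2) atTop atTop :=
    tendsto_atTop_add_const_left _ _ (tendsto_pow_atTop (by norm_num))
  exact (tendsto_rpow_atTop (by positivity)).comp h

theorem deriv_Rr_pos {y : ℝ} (hy : 0 < y) : 0 < deriv (Rr N) y := by
  have := sub_one_pos_of_two_le hN
  have := Rr_pos N y
  rw [deriv_Rr]
  positivity

theorem Rr_pow_mul_deriv_Rr_le {y : ℝ} (hy : 0 < y) :
    Rr N y ^ (N - 1) * (((N : ℝ) - 1) * deriv (Rr N) y) ≤ Rr N y := by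
  have hM := sub_one_pos_of_two_le hN
  have hr := Rr_pos N y
  have hyS : y ≤ Rr N y ^ (N - 1) :=
    le_of_sq_le_sq (by linarith [Rr_pow_sq hN y]) (by positivity)
  calc Rr N y ^ (N - 1) * (((N : ℝ) - 1) * deriv (Rr N) y)
      = Rr N y * (y / Rr N y ^ (N - 1)) := by
        rw [deriv_Rr, ← Rr_pow_sq hN]
        field_simp
    _ ≤ Rr N y := mul_le_of_le_one_right hr.le ((div_le_one (by positivity)).mpr hyS)

-- The term `(1 + y ^ 2)⁻¹` compensates for the vanishing of `r'` at `y = 0`.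
theorem Rr_le_Rr_pow_mul_deriv_Rr {y : ℝ} (hy : 0 < y) :
    Rr N y ≤ 4 * Rr N y ^ (N - 1) * (((N : ℝ) - 1) * deriv (Rr N) y + (1 + y ^ 2)⁻¹) := by
  have hM := sub_one_pos_of_two_le hN
  have hS := Rr_pow_sq hN y
  have hr := one_le_Rr hN y
  have hrS : Rr N y ≤ Rr N y ^ (N - 1) := le_self_pow₀ hr (by omega)
  rw [deriv_Rr, show ((N : ℝ) - 1) * (y * Rr N y / (((N : ℝ) - 1) * (1 + y ^ 2))) +
    (1 + y ^ 2)⁻¹ = (y * Rr N y + 1) / (Rr N y ^ (N - 1)) ^ 2 by rw [hS]; field_simp]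
  generalize Rr N y ^ (N - 1) = S at *
  generalize Rr N y = r at *
  have hS0 : 0 < S := by linarith
  rw [show 4 * S * ((y * r + 1) / S ^ 2) = 4 * (y * r + 1) / S by field_simp, le_div_iff₀ hS0]
  have hS1 : S ≤ 1 + y := le_of_sq_le_sq (by nlinarith) (by positivity)
  rcases le_total 1 y with _ | _
  · nlinarith [mul_le_mul_of_nonneg_left hS1 (by linarith : 0 ≤ r)]
  · have : r * S ≤ 2 * 2 := mul_le_mul (by linarith) (by linarith) hS0.le (by norm_num)
    nlinarith

theorem integral_w1_comp_Rr {b : ℝ} (hb : 0 < b) (p : ℝ) :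
    IntegrableOn (fun y => w1 (b * (Rr N y - p)) * (b * deriv (Rr N) y)) (Set.Ioi 0) ∧
    ∫ y in Set.Ioi (0 : ℝ), w1 (b * (Rr N y - p)) * (b * deriv (Rr N) y) =
      1 - w (b * (1 - p)) := by
  have hderiv : ∀ y ∈ Set.Ici (0 : ℝ), HasDerivAt (fun y => w (b * (Rr N y - p)))
      (w1 (b * (Rr N y - p)) * (b * deriv (Rr N) y)) y := fun y _ =>
    (hasDerivAt_w _).comp y
      (((hasDerivAt_Rr N y).differentiableAt.hasDerivAt.sub_const p).const_mul b)
  have hpos : ∀ y ∈ Set.Ioi (0 : ℝ), 0 ≤ w1 (b * (Rr N y - p)) * (b * deriv (Rr N) y) :=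
    fun y hy => by
      have := deriv_Rr_pos hN hy
      have := w1_pos (b * (Rr N y - p))
      positivity
  have hlim : Tendsto (fun y => w (b * (Rr N y - p))) atTop (𝓝 1) :=
    tendsto_w_atTop.comp ((tendsto_atTop_add_const_right _ (-p)
      (tendsto_Rr_atTop hN)).const_mul_atTop hb)
  refine ⟨integrableOn_Ioi_deriv_of_nonneg' hderiv hpos hlim, ?_⟩
  rw [integral_Ioi_of_hasDerivAt_of_nonneg' hderiv hpos hlim, Rr_zero]

end

/-! ### Integrals localized near an interface -/

theorem exists_one_add_pow_le (m : ℕ) {a : ℝ} (ha : 0 < a) :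
    ∃ C > 0, ∀ u : ℝ, 0 ≤ u → (1 + u) ^ m ≤ C * exp (a * u) := by
  refine ⟨m.factorial / a ^ m * exp a, by positivity, fun u hu => ?_⟩
  have h := Real.pow_div_factorial_le_exp (a * (1 + u)) (by positivity) m
  rw [mul_assoc, ← exp_add, show a + a * u = a * (1 + u) by ring]
  rw [div_le_iff₀ (by positivity), mul_pow] at h
  rw [div_mul_eq_mul_div, le_div_iff₀ (by positivity)]
  linarith

theorem pow_le_pow_mul_one_add_abs {r p : ℝ} (hr : 0 ≤ r) (hp : 1 ≤ p) (m : ℕ) :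
    r ^ m ≤ p ^ m * (1 + |r - p|) ^ m := by
  rw [← mul_pow]
  gcongr
  nlinarith [le_abs_self (r - p), abs_nonneg (r - p)]

/-- The measure `r dy` localized at distance `1 / a` from the interface `r = p`: all integrands of
the projection system are dominated by multiples of such weights. -/
noncomputable def interfaceWeight (N : ℕ) (a p y : ℝ) : ℝ := exp (-a * |Rr N y - p|) * Rr N y

/-- The entry `∫ w′(r - p) w′(r - q) r dy` of the matrix of the projection system. -/
noncomputable def overlap (N : ℕ) (p q : ℝ) : ℝ :=
  ∫ y in Set.Ioi (0 : ℝ), w1 (Rr N y - p) * w1 (Rr N y - q) * Rr N y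

theorem interfaceWeight_pos (N : ℕ) (a p y : ℝ) : 0 < interfaceWeight N a p y :=
  mul_pos (exp_pos _) (Rr_pos N y)

theorem continuous_interfaceWeight (N : ℕ) (a p : ℝ) : Continuous (interfaceWeight N a p) := by
  have := continuous_Rr N
  unfold interfaceWeight
  fun_prop

theorem abs_w1_mul_w1_mul_Rr_le (N : ℕ) (p q y : ℝ) :
    |w1 (Rr N y - p) * w1 (Rr N y - q) * Rr N y| ≤ 4 * interfaceWeight N √2 q y := by
  have := Rr_pos N y
  have := w1_pos (Rr N y - p)
  have := w1_pos (Rr N y - q)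
  rw [abs_of_pos (by positivity), interfaceWeight, ← mul_assoc]
  refine mul_le_mul_of_nonneg_right ?_ (Rr_pos N y).le
  exact (mul_le_of_le_one_left (w1_pos _).le (w1_le_one _)).trans (w1_le _)

section

variable {N : ℕ} (hN : 2 ≤ N)
include hN

theorem exists_interfaceWeight_le {a b : ℝ} (hb : 0 < b) (hab : a = 2 * √2 * b) :
    ∃ C > 0, ∀ p : ℝ, 1 ≤ p → ∀ y : ℝ, 0 < y → interfaceWeight N a p y ≤
      C * p ^ (N - 1) * (w1 (b * (Rr N y - p)) * (b * deriv (Rr N) y) + (1 + y ^ 2)⁻¹) := by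
  have ha : 0 < a := by rw [hab]; positivity
  have hM := sub_one_pos_of_two_le hN
  obtain ⟨C, hC, hCle⟩ := exists_one_add_pow_le (N - 1) (half_pos ha)
  refine ⟨4 * C * (2 * ((N : ℝ) - 1) / b + 1), by positivity, fun p hp y hy => ?_⟩
  have hr := Rr_pos N y
  have hr' := deriv_Rr_pos hN hy
  have hpow : Rr N y ^ (N - 1) ≤ p ^ (N - 1) * (C * exp (a / 2 * |Rr N y - p|)) :=
    (pow_le_pow_mul_one_add_abs hr.le hp (N - 1)).trans
      (by gcongr; exact hCle _ (abs_nonneg _))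
  have hw1 : exp (-(a / 2) * |Rr N y - p|) ≤ 2 * w1 (b * (Rr N y - p)) := by
    have h := le_w1 (b * (Rr N y - p))
    rw [abs_mul, abs_of_pos hb,
      show -√2 * (b * |Rr N y - p|) = -(a / 2) * |Rr N y - p| by rw [hab]; ring] at h
    linarith
  have hexp : exp (-a * |Rr N y - p|) * exp (a / 2 * |Rr N y - p|) =
      exp (-(a / 2) * |Rr N y - p|) := by rw [← exp_add]; ring_nf
  have hexp_le : exp (-(a / 2) * |Rr N y - p|) ≤ 1 := exp_le_one_iff.mpr
    (mul_nonpos_of_nonpos_of_nonneg (by linarith) (abs_nonneg _))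
  have hw1_pos := w1_pos (b * (Rr N y - p))
  calc exp (-a * |Rr N y - p|) * Rr N y
      ≤ exp (-a * |Rr N y - p|) * (4 * (p ^ (N - 1) * (C * exp (a / 2 * |Rr N y - p|))) *
        (((N : ℝ) - 1) * deriv (Rr N) y + (1 + y ^ 2)⁻¹)) := by
        gcongr
        exact (Rr_le_Rr_pow_mul_deriv_Rr hN hy).trans (by gcongr)
    _ = 4 * C * p ^ (N - 1) * (exp (-(a / 2) * |Rr N y - p|) *
        (((N : ℝ) - 1) * deriv (Rr N) y) + exp (-(a / 2) * |Rr N y - p|) * (1 + y ^ 2)⁻¹) := by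
        rw [← hexp]; ring
    _ ≤ 4 * C * p ^ (N - 1) * (2 * w1 (b * (Rr N y - p)) * (((N : ℝ) - 1) * deriv (Rr N) y) +
        1 * (1 + y ^ 2)⁻¹) := by gcongr
    _ = 4 * C * p ^ (N - 1) * (2 * ((N : ℝ) - 1) / b *
        (w1 (b * (Rr N y - p)) * (b * deriv (Rr N) y)) + 1 * (1 + y ^ 2)⁻¹) := by field_simp
    _ ≤ 4 * C * p ^ (N - 1) * ((2 * ((N : ℝ) - 1) / b + 1) *
        (w1 (b * (Rr N y - p)) * (b * deriv (Rr N) y)) +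
        (2 * ((N : ℝ) - 1) / b + 1) * (1 + y ^ 2)⁻¹) := by
        have : 0 ≤ 2 * ((N : ℝ) - 1) / b := by positivity
        gcongr <;> linarith
    _ = _ := by ring

theorem exists_integral_interfaceWeight_le {a : ℝ} (ha : 0 < a) :
    ∃ C > 0, ∀ p : ℝ, 1 ≤ p → IntegrableOn (interfaceWeight N a p) (Set.Ioi 0) ∧
      ∫ y in Set.Ioi (0 : ℝ), interfaceWeight N a p y ≤ C * p ^ (N - 1) := by
  have hb : 0 < a / (2 * √2) := by positivity
  obtain ⟨C, hC, hle⟩ := exists_interfaceWeight_le hN hb (a := a) (by field_simp)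
  refine ⟨C * (2 + π), by positivity, fun p hp => ?_⟩
  obtain ⟨hD, hD_eq⟩ := integral_w1_comp_Rr hN hb p
  have hq : IntegrableOn (fun y : ℝ => (1 + y ^ 2)⁻¹) (Set.Ioi 0) :=
    integrable_inv_one_add_sq.integrableOn
  have hdom := (hD.add hq).const_mul (C * p ^ (N - 1))
  have hint : IntegrableOn (interfaceWeight N a p) (Set.Ioi 0) := by
    refine hdom.mono' (continuous_interfaceWeight N a p).aestronglyMeasurable ?_
    filter_upwards [ae_restrict_mem measurableSet_Ioi] with y hy
    rw [Real.norm_of_nonneg (interfaceWeight_pos N a p y).le]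
    exact hle p hp y hy
  have hq_le : ∫ y in Set.Ioi (0 : ℝ), (1 + y ^ 2)⁻¹ ≤ π := by
    rw [← integral_univ_inv_one_add_sq]
    exact setIntegral_le_integral integrable_inv_one_add_sq (.of_forall fun y => by
      simp only [Pi.zero_apply]; positivity)
  refine ⟨hint, (setIntegral_mono_on hint hdom measurableSet_Ioi fun y => hle p hp y).trans ?_⟩
  simp only [Pi.add_apply]
  rw [integral_const_mul, integral_add hD hq, hD_eq, mul_assoc, mul_assoc, mul_comm (2 + π)]
  gcongr
  linarith [neg_le_of_abs_le (abs_w_le_one (a / (2 * √2) * (1 - p)))]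

theorem exists_abs_setIntegral_le {a : ℝ} (ha : 0 < a) :
    ∃ C > 0, ∀ p : ℝ, 1 ≤ p → ∀ (K : ℝ) (u : ℝ → ℝ), 0 ≤ K →
      (∀ y, 0 < y → |u y| ≤ K * interfaceWeight N a p y) →
      |∫ y in Set.Ioi (0 : ℝ), u y| ≤ C * K * p ^ (N - 1) := by
  obtain ⟨C, hC, hle⟩ := exists_integral_interfaceWeight_le hN ha
  refine ⟨C, hC, fun p hp K u hK hu => ?_⟩
  calc |∫ y in Set.Ioi (0 : ℝ), u y| ≤ ∫ y in Set.Ioi (0 : ℝ), K * interfaceWeight N a p y :=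
        norm_integral_le_of_norm_le (f := u) ((hle p hp).1.const_mul K)
          ((ae_restrict_mem measurableSet_Ioi).mono fun y hy => hu y hy)
    _ ≤ K * (C * p ^ (N - 1)) := by
        rw [integral_const_mul]
        exact mul_le_mul_of_nonneg_left (hle p hp).2 hK
    _ = C * K * p ^ (N - 1) := by ring

theorem integrableOn_of_abs_le_interfaceWeight {a p K : ℝ} {u : ℝ → ℝ} (ha : 0 < a) (hp : 1 ≤ p)
    (hu : AEStronglyMeasurable u (volume.restrict (Set.Ioi 0)))
    (hle : ∀ y, 0 < y → |u y| ≤ K * interfaceWeight N a p y) : IntegrableOn u (Set.Ioi 0) := by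
  obtain ⟨C, -, hint⟩ := exists_integral_interfaceWeight_le hN ha
  exact ((hint p hp).1.const_mul K).mono' hu
    ((ae_restrict_mem measurableSet_Ioi).mono fun y hy => hle y hy)

theorem pow_mul_w1_three_mul_le {C : ℝ} (hC : ∀ u : ℝ, 0 ≤ u → (1 + u) ^ (N - 1) ≤ C * exp (√2 * u))
    {p y : ℝ} (hp : 0 < p) (hy : 0 < y) :
    p ^ (N - 1) * (w1 (3 * (Rr N y - p)) * (3 * deriv (Rr N) y)) ≤
      48 * C / ((N : ℝ) - 1) * (w1 (Rr N y - p) * w1 (Rr N y - p) * Rr N y) := by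
  have hM := sub_one_pos_of_two_le hN
  have hr := Rr_pos N y
  have hr' := deriv_Rr_pos hN hy
  have hw1 := w1_pos (Rr N y - p)
  have hw1' := w1_pos (3 * (Rr N y - p))
  set e := exp (-√2 * |Rr N y - p|) with he
  have hC0 : 0 ≤ C := by
    have := hC 0 le_rfl
    simp only [add_zero, one_pow, mul_zero, exp_zero, mul_one] at this
    linarith
  have hpow : p ^ (N - 1) ≤ Rr N y ^ (N - 1) * (C * exp (√2 * |Rr N y - p|)) := by
    refine (pow_le_pow_mul_one_add_abs hp.le (one_le_Rr hN y) (N - 1)).trans ?_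
    rw [abs_sub_comm]
    gcongr
    exact hC _ (abs_nonneg _)
  have hw3 : w1 (3 * (Rr N y - p)) ≤ 4 * e ^ 3 := by
    refine (w1_le _).trans_eq ?_
    rw [he, ← exp_nat_mul, abs_mul, abs_of_pos (by norm_num : (0 : ℝ) < 3)]
    ring_nf
  have hcancel : e * exp (√2 * |Rr N y - p|) = 1 := by rw [he, ← exp_add]; simp
  calc p ^ (N - 1) * (w1 (3 * (Rr N y - p)) * (3 * deriv (Rr N) y))
      ≤ Rr N y ^ (N - 1) * (C * exp (√2 * |Rr N y - p|)) * (4 * e ^ 3 * (3 * deriv (Rr N) y)) := by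
        gcongr
    _ = 12 * C / ((N : ℝ) - 1) * e ^ 2 * (e * exp (√2 * |Rr N y - p|)) *
        (Rr N y ^ (N - 1) * (((N : ℝ) - 1) * deriv (Rr N) y)) := by field_simp; ring
    _ ≤ 12 * C / ((N : ℝ) - 1) * (2 * w1 (Rr N y - p)) ^ 2 * 1 * Rr N y := by
        rw [hcancel]
        gcongr
        · linarith [le_w1 (Rr N y - p)]
        · exact Rr_pow_mul_deriv_Rr_le hN hy
    _ = _ := by ring

theorem exists_le_overlap_self :
    ∃ c > 0, ∀ p : ℝ, 1 ≤ p → c * p ^ (N - 1) ≤ overlap N p p := by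
  obtain ⟨C, hC, hCle⟩ := exists_one_add_pow_le (N - 1) (a := √2) (by positivity)
  have hM := sub_one_pos_of_two_le hN
  refine ⟨((N : ℝ) - 1) / (48 * C), by positivity, fun p hp => ?_⟩
  obtain ⟨hD, hD_eq⟩ := integral_w1_comp_Rr hN (b := 3) (by norm_num) p
  have hw : w (3 * (1 - p)) ≤ 0 := w_nonpos (by linarith)
  have hmeas : Continuous fun y => w1 (Rr N y - p) * w1 (Rr N y - p) * Rr N y := by
    have := continuous_Rr N
    have := continuous_w1
    fun_prop
  have hint := integrableOn_of_abs_le_interfaceWeight hN (a := √2) (by positivity) hp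
    hmeas.aestronglyMeasurable fun y _ => abs_w1_mul_w1_mul_Rr_le N p p y
  have key := setIntegral_mono_on (hD.const_mul (p ^ (N - 1)))
    (hint.const_mul (48 * C / ((N : ℝ) - 1))) measurableSet_Ioi
    fun y hy => pow_mul_w1_three_mul_le hN hCle (by linarith) hy
  rw [integral_const_mul, integral_const_mul, hD_eq, ← overlap] at key
  rw [div_mul_eq_mul_div, div_le_iff₀ (by positivity)]
  rw [div_mul_eq_mul_div, le_div_iff₀ hM] at key
  have : 0 ≤ p ^ (N - 1) * ((N : ℝ) - 1) := by positivity
  nlinarith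

end

/-! ### The distance `η` between consecutive interfaces -/

theorem le_of_hasDerivAt_of_lt_of_eq {a : ℝ} {u v u' v' : ℝ → ℝ}
    (hu : ∀ x, a ≤ x → HasDerivAt u (u' x) x) (hv : ∀ x, a ≤ x → HasDerivAt v (v' x) x)
    (ha : u a ≤ v a) (hlt : ∀ x, a ≤ x → u x = v x → u' x < v' x) {x : ℝ} (hx : a ≤ x) :
    u x ≤ v x :=
  image_le_of_deriv_right_lt_deriv_boundary'
    (fun y hy => (hu y hy.1).continuousAt.continuousWithinAt)
    (fun y hy => (hu y hy.1).hasDerivWithinAt) ha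
    (fun y hy => (hv y hy.1).continuousAt.continuousWithinAt)
    (fun y hy => (hv y hy.1).hasDerivWithinAt) (fun y hy => hlt y hy.1) ⟨hx, le_rfl⟩

/-- `u` solves `u′ = κ e^{-u} - u / (2τ)` on `[1, ∞)` with `u 1 = 0`. This is the equation of
`u τ = √2 η (-τ)`, with `κ = √2 β`, after reversing time. -/
structure IsLogFlow (κ : ℝ) (u : ℝ → ℝ) : Prop where
  initial : u 1 = 0
  hasDerivAt : ∀ τ, 1 ≤ τ → HasDerivAt u (κ * exp (-u τ) - u τ / (2 * τ)) τ

namespace IsLogFlow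

variable {κ : ℝ} {u : ℝ → ℝ} (hu : IsLogFlow κ u) (hκ : 0 < κ) {τ : ℝ} (hτ : 1 ≤ τ)
include hu hκ hτ

theorem nonneg : 0 ≤ u τ := by
  refine le_of_hasDerivAt_of_lt_of_eq (fun x _ => hasDerivAt_const x 0) hu.hasDerivAt
    hu.initial.ge (fun x _ h => ?_) hτ
  simpa [← h] using hκ

theorem le_log : u τ ≤ log (1 + κ) + log τ := by
  have hlog : 0 ≤ log (1 + κ) := log_nonneg (by linarith)
  refine le_of_hasDerivAt_of_lt_of_eq hu.hasDerivAt
    (fun x hx => (hasDerivAt_log (by linarith)).const_add _)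
    (by simpa [hu.initial] using hlog) (fun x hx h => ?_) hτ
  have hx0 : 0 < x := by linarith
  have hexp : κ * exp (-u x) = κ / (1 + κ) * x⁻¹ := by
    rw [h, neg_add, exp_add, exp_neg, exp_neg, exp_log (by linarith), exp_log hx0]
    ring
  have hlt : κ / (1 + κ) * x⁻¹ < x⁻¹ :=
    mul_lt_of_lt_one_left (by positivity) ((div_lt_one (by linarith)).mpr (by linarith))
  have : 0 ≤ u x / (2 * x) := div_nonneg (hu.nonneg hκ hx) (by linarith)
  linarith

theorem log_sub_log_le : log (min 1 (κ / 2)) + log τ - log (1 + log (1 + κ) + log τ) ≤ u τ := by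
  have hlog : 0 ≤ log (1 + κ) := log_nonneg (by linarith)
  set c := min 1 (κ / 2)
  set ℓ : ℝ → ℝ := fun x => 1 + log (1 + κ) + log x
  have hc0 : 0 < c := by positivity
  have hcκ : c ≤ κ / 2 := min_le_right _ _
  have hℓ1 : ∀ x, 1 ≤ x → 1 ≤ ℓ x := fun x hx => by linarith [log_nonneg hx]
  refine le_of_hasDerivAt_of_lt_of_eq (u := fun x => log c + log x - log (ℓ x))
    (u' := fun x => x⁻¹ - x⁻¹ / ℓ x) (fun x hx => ?_) hu.hasDerivAt ?_ (fun x hx h => ?_) hτ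
  · have hx0 : x ≠ 0 := by linarith
    exact ((hasDerivAt_log hx0).const_add _).sub
      (((hasDerivAt_log hx0).const_add _).log (by linarith [hℓ1 x hx]))
  · have : log c ≤ 0 := log_nonpos hc0.le (min_le_left _ _)
    have : 0 ≤ log (ℓ 1) := log_nonneg (hℓ1 1 le_rfl)
    simp only [log_one, hu.initial]
    linarith
  · have hx0 : 0 < x := by linarith
    have hℓx := hℓ1 x hx
    have hexp : exp (-u x) = ℓ x / (c * x) := by
      rw [← h, ← log_mul hc0.ne' hx0.ne', ← log_div (by positivity) (by positivity), ← log_inv,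
        exp_log (by positivity), inv_div]
    have hκc : 2 * (ℓ x / x) ≤ κ * exp (-u x) := by
      have h2 : 2 ≤ κ / c := (le_div_iff₀ hc0).mpr (by linarith)
      calc 2 * (ℓ x / x) ≤ κ / c * (ℓ x / x) := by gcongr
        _ = κ * exp (-u x) := by rw [hexp]; field_simp
    have hux : u x / (2 * x) ≤ 1 / 2 * (ℓ x / x) := by
      rw [div_le_iff₀ (by positivity)]
      field_simp
      linarith [hu.le_log hκ hx]
    have h1 : x⁻¹ ≤ ℓ x / x := by
      rw [inv_eq_one_div]
      gcongr
    have : 0 < x⁻¹ / ℓ x := by positivity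
    have : 0 < x⁻¹ := by positivity
    linarith

end IsLogFlow

/-- The small parameter `log|t| / |t|` of the asymptotics as `t → -∞`. -/
noncomputable def logRatio (t : ℝ) : ℝ := log |t| / |t|

theorem tendsto_logRatio : Tendsto logRatio atBot (𝓝 0) :=
  Real.isLittleO_log_id_atTop.tendsto_div_nhds_zero.comp tendsto_abs_atBot_atTop

theorem tendsto_log_abs_atBot : Tendsto (fun t : ℝ => log |t|) atBot atTop :=
  tendsto_log_atTop.comp tendsto_abs_atBot_atTop

theorem eventually_logRatio_mem_Ioc : ∀ᶠ t in atBot, logRatio t ∈ Set.Ioc 0 1 := by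
  filter_upwards [tendsto_logRatio.eventually_le_const zero_lt_one,
    tendsto_log_abs_atBot.eventually_gt_atTop 0, eventually_lt_atBot 0] with t h1 hlog ht
  exact ⟨div_pos hlog (abs_pos.mpr ht.ne), h1⟩

theorem eventually_logRatio_nonneg : 0 ≤ᶠ[atBot] logRatio :=
  eventually_logRatio_mem_Ioc.mono fun _ h => h.1.le

theorem one_isBigO_log_abs : (fun _ : ℝ => (1 : ℝ)) =O[atBot] fun t : ℝ => log |t| :=
  (isLittleO_const_left.mpr (Or.inr (tendsto_norm_atTop_atTop.comp tendsto_log_abs_atBot))).isBigO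

theorem logRatio_isBigO_rpow {a : ℝ} (ha : a ≤ 1) :
    logRatio =O[atBot] fun t => logRatio t ^ a := by
  refine .of_bound' ?_
  filter_upwards [eventually_logRatio_mem_Ioc] with t ht
  rw [Real.norm_of_nonneg ht.1.le, Real.norm_of_nonneg (by have := ht.1; positivity)]
  exact Real.self_le_rpow_of_le_one ht.1.le ht.2 ha

theorem inv_sqrt_abs_isBigO :
    (fun t : ℝ => (√|t|)⁻¹) =O[atBot] fun t => logRatio t ^ (1 / 2 : ℝ) := by
  have h : (fun t : ℝ => |t|⁻¹) =O[atBot] logRatio :=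
    (one_isBigO_log_abs.mul (isBigO_refl (fun t : ℝ => |t|⁻¹) atBot)).congr
      (fun t => one_mul _) fun t => (div_eq_mul_inv _ _).symm
  refine (h.rpow (r := 1 / 2) (by norm_num) eventually_logRatio_nonneg).congr_left fun t => ?_
  rw [Real.inv_rpow (abs_nonneg t), Real.sqrt_eq_rpow]

namespace Setting

variable {N k : ℕ} {η : ℝ → ℝ} {γ : ℕ → ℝ} (S : Setting N k η γ)
include S

theorem isLogFlow : IsLogFlow (√2 * β) (fun τ => √2 * η (-τ)) where
  initial := by rw [S.hηinit, mul_zero]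
  hasDerivAt τ hτ := by
    have hη := (S.hηdiff (-τ) (by linarith)).hasDerivAt
    have hode := S.hηode (-τ) (by linarith)
    rw [mul_neg, div_neg] at hode
    refine HasDerivAt.congr_deriv ((hη.comp τ (hasDerivAt_neg τ)).const_mul √2) ?_
    rw [← neg_mul]
    linear_combination (-√2) * hode

theorem eta_nonneg {t : ℝ} (ht : t ≤ -1) : 0 ≤ η t := by
  have hβ := beta_pos
  simpa using nonneg_of_mul_nonneg_right
    (S.isLogFlow.nonneg (by positivity) (τ := -t) (by linarith)) (by positivity : (0 : ℝ) < √2)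

theorem eta_isBigO_log : η =O[atBot] fun t => log |t| := by
  have hβ := beta_pos
  suffices h : η =O[atBot] fun t => log (1 + √2 * β) + log |t| from
    h.trans (((one_isBigO_log_abs.const_mul_left (log (1 + √2 * β))).add
      (isBigO_refl _ _)).congr_left fun t => by rw [mul_one])
  refine .of_bound' ((eventually_le_atBot (-1)).mono fun t ht => ?_)
  have hη := S.eta_nonneg ht
  have h := S.isLogFlow.le_log (by positivity) (τ := -t) (by linarith)
  rw [neg_neg, ← abs_of_nonpos (by linarith)] at h
  rw [Real.norm_of_nonneg hη]
  exact (le_mul_of_one_le_left hη one_le_sqrt_two).trans (h.trans (le_abs_self _))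

theorem exp_neg_eta_isBigO : (fun t => exp (-√2 * η t)) =O[atBot] logRatio := by
  have hβ := beta_pos
  set κ := √2 * β
  have hc : 0 < min 1 (κ / 2) := by positivity
  suffices h : (fun t => exp (-√2 * η t)) =O[atBot]
      fun t => (1 + log (1 + κ) + log |t|) * (min 1 (κ / 2) * |t|)⁻¹ by
    have hlog : (fun t : ℝ => 1 + log (1 + κ) + log |t|) =O[atBot] fun t => log |t| :=
      ((one_isBigO_log_abs.const_mul_left (1 + log (1 + κ))).add (isBigO_refl _ _)).congr_left
        (by simp)
    have hinv : (fun t : ℝ => (min 1 (κ / 2) * |t|)⁻¹) =O[atBot] fun t => |t|⁻¹ :=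
      ((isBigO_refl _ _).const_mul_left _).congr_left fun t => (mul_inv _ _).symm
    exact h.trans (hlog.mul hinv)
  refine .of_bound' ((eventually_le_atBot (-1)).mono fun t ht => ?_)
  have h := S.isLogFlow.log_sub_log_le (by positivity) (τ := -t) (by linarith)
  have hℓ : 0 < 1 + log (1 + κ) + log |t| := by
    have := log_nonneg (show (1 : ℝ) ≤ |t| by rw [abs_of_nonpos] <;> linarith)
    have := log_nonneg (show 1 ≤ 1 + κ by linarith [show 0 < κ by positivity])
    linarith
  have ht0 : 0 < |t| := abs_pos.mpr (by linarith)
  rw [neg_neg, ← abs_of_nonpos (by linarith), ← log_mul hc.ne' ht0.ne',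
    ← log_div (by positivity) hℓ.ne', log_le_iff_le_exp (by positivity)] at h
  rw [Real.norm_of_nonneg (exp_pos _).le, Real.norm_of_nonneg (by positivity), neg_mul, exp_neg,
    ← inv_inv (1 + log (1 + κ) + log |t|), ← mul_inv, mul_comm (_)⁻¹, ← div_eq_mul_inv]
  gcongr

theorem tendsto_eta : Tendsto η atBot atTop := by
  have h := S.exp_neg_eta_isBigO.trans_tendsto tendsto_logRatio
  rw [Real.tendsto_exp_comp_nhds_zero] at h
  refine ((tendsto_neg_atBot_atTop.comp h).const_mul_atTop
    (by positivity : (0 : ℝ) < (√2)⁻¹)).congr fun t => ?_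
  simp only [Function.comp_apply]
  field_simp

theorem exp_neg_mul_eta_isBigO {a : ℝ} (ha : 0 ≤ a) :
    (fun t => exp (-a * η t)) =O[atBot] fun t => logRatio t ^ (a / √2) := by
  refine (S.exp_neg_eta_isBigO.rpow (r := a / √2) (by positivity)
    eventually_logRatio_nonneg).congr_left fun t => ?_
  rw [← exp_mul]
  congr 1
  field_simp

theorem deriv_eta_isBigO : deriv η =O[atBot] logRatio := by
  have hdiv : (fun t => η t / (2 * t)) =O[atBot] logRatio := by
    have hinv : (fun t : ℝ => (2 * t)⁻¹) =O[atBot] fun t => |t|⁻¹ :=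
      .of_bound 2⁻¹ (.of_forall fun t => by simp [mul_comm])
    exact S.eta_isBigO_log.mul hinv
  refine (hdiv.neg_left.sub (S.exp_neg_eta_isBigO.const_mul_left β)).congr' ?_ .rfl
  filter_upwards [eventually_le_atBot (-1)] with t ht
  linarith [S.hηode t ht]

end Setting

/-! ### Almost equally spaced interfaces -/

/-- The points `q 1, …, q k` are equally spaced with step `e`, up to an error `B`. -/
def Spaced (k : ℕ) (q : ℕ → ℝ) (e B : ℝ) : Prop :=
  ∀ i ∈ Finset.Icc 1 k, ∀ j ∈ Finset.Icc 1 k, |q i - q j - ((i : ℝ) - j) * e| ≤ B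

namespace Spaced

variable {k : ℕ} {q : ℕ → ℝ} {e B : ℝ} (hq : Spaced k q e B) (he : 0 ≤ e) {i j : ℕ}
  (hi : i ∈ Finset.Icc 1 k) (hj : j ∈ Finset.Icc 1 k)
include hq he hi hj

theorem sub_le_sub_of_lt (hij : j < i) : e - B ≤ q i - q j := by
  have h := neg_le_of_abs_le (hq i hi j hj)
  have : (j : ℝ) + 1 ≤ i := by exact_mod_cast hij
  nlinarith

theorem neg_le_sub_of_le (hij : j ≤ i) : -B ≤ q i - q j := by
  have h := neg_le_of_abs_le (hq i hi j hj)
  have : (j : ℝ) ≤ i := by exact_mod_cast hij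
  nlinarith

theorem sub_le_add_of_le_succ (hij : i ≤ j + 1) : q i - q j ≤ e + B := by
  have h := le_of_abs_le (hq i hi j hj)
  have : (i : ℝ) ≤ j + 1 := by exact_mod_cast hij
  nlinarith

theorem sub_le_abs_sub (hij : i ≠ j) : e - B ≤ |q i - q j| := by
  rcases lt_or_gt_of_ne hij with h | h
  · rw [abs_sub_comm]
    exact (hq.sub_le_sub_of_lt he hj hi h).trans (le_abs_self _)
  · exact (hq.sub_le_sub_of_lt he hi hj h).trans (le_abs_self _)

end Spaced

theorem exists_midpoint_interval {k : ℕ} (hk : 2 ≤ k) (q : ℕ → ℝ) (r : ℝ) :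
    r ≤ (q 1 + q 2) / 2 ∨
    (∃ j, 2 ≤ j ∧ j < k ∧ (q j + q (j - 1)) / 2 < r ∧ r ≤ (q j + q (j + 1)) / 2) ∨
    (q k + q (k - 1)) / 2 < r := by
  by_contra! H
  obtain ⟨hfirst, hmid, hlast⟩ := H
  have h : ∀ n, 2 ≤ n → n ≤ k → (q n + q (n - 1)) / 2 < r := by
    intro n hn
    induction n, hn using Nat.le_induction with
    | base => intro _; simpa [add_comm] using hfirst
    | succ n hn ih =>
      intro hnk
      have := hmid n hn (by omega) (ih (by omega))
      simpa [add_comm] using this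
  exact absurd (h k hk le_rfl) (not_lt.mpr hlast)

/-! ### The weight `Φ` near an interface -/

/-- The size of the weight `Φ` at distance `x` from an interface, when the interfaces are `e`
apart. It saturates at the middle of two consecutive interfaces. -/
noncomputable def envelope (σ e x : ℝ) : ℝ := exp (σ * (min x (e / 2) - e))

namespace Spaced

variable {k : ℕ} {q : ℕ → ℝ} {e B : ℝ} (hq : Spaced k q e B) (he : 0 ≤ e) {l l' j : ℕ}
  (hl : l ∈ Finset.Icc 1 k) (hl' : l' ∈ Finset.Icc 1 k) (hj : j ∈ Finset.Icc 1 k)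
  {σ : ℝ} (hσ : 0 ≤ σ) {r : ℝ}
include hq he hl hl' hj hσ

theorem exp_right_le_envelope (hll : l' < l) (hr : (q l + q l') / 2 < r) :
    exp (σ * (-r + q l')) ≤ exp (2 * σ * B) * envelope σ e |r - q j| := by
  have hgap := hq.sub_le_sub_of_lt he hl hl' hll
  have hB : 0 ≤ B := (abs_nonneg _).trans (hq j hj j hj)
  have hdist : -(r - q l') + e - 2 * B ≤ |r - q j| := by
    rcases le_or_gt j l' with h | h
    · linarith [hq.neg_le_sub_of_le he hl' hj h, le_abs_self (r - q j)]
    · linarith [hq.sub_le_sub_of_lt he hj hl' h, neg_abs_le (r - q j)]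
  have hmin := le_min hdist (show -(r - q l') + e - 2 * B ≤ e / 2 by linarith)
  rw [envelope, ← exp_add, exp_le_exp]
  linarith [mul_le_mul_of_nonneg_left hmin hσ]

theorem exp_left_le_envelope (hll : l < l') (hr : r ≤ (q l + q l') / 2) :
    exp (σ * (r - q l')) ≤ exp (2 * σ * B) * envelope σ e |r - q j| := by
  have hgap := hq.sub_le_sub_of_lt he hl' hl hll
  have hB : 0 ≤ B := (abs_nonneg _).trans (hq j hj j hj)
  have hdist : r - q l' + e - 2 * B ≤ |r - q j| := by
    rcases le_or_gt l' j with h | h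
    · linarith [hq.neg_le_sub_of_le he hj hl' h, neg_abs_le (r - q j)]
    · linarith [hq.sub_le_sub_of_lt he hl' hj h, le_abs_self (r - q j)]
  have hmin := le_min hdist (show r - q l' + e - 2 * B ≤ e / 2 by linarith)
  rw [envelope, ← exp_add, exp_le_exp]
  linarith [mul_le_mul_of_nonneg_left hmin hσ]

end Spaced

namespace IsPhi

variable {N k : ℕ} {η : ℝ → ℝ} {γ : ℕ → ℝ} {σ : ℝ} {Φ : ℝ → ℝ → ℝ}
  (hΦ : IsPhi N k η γ σ Φ) (hk : 2 ≤ k) {t r : ℝ} (hr : 1 < r)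
include hΦ hk hr

theorem pos : 0 < Φ t r := by
  rcases exists_midpoint_interval hk (fun j => rho0 N k η γ j t) r with h | ⟨j, h1, h2, h3, h4⟩ | h
  · rw [hΦ.1 t r hr h]
    positivity
  · rw [hΦ.2.1 t r j h1 h2 h3 h4]
    positivity
  · rw [hΦ.2.2 t r h]
    positivity

variable (hσ : 0 ≤ σ) {e B : ℝ} (he : 0 ≤ e) (hq : Spaced k (fun j => rho0 N k η γ j t) e B)
  {j : ℕ} (hj : j ∈ Finset.Icc 1 k)
include hσ he hq hj

theorem le_envelope : Φ t r ≤ 2 * (exp (2 * σ * B) * envelope σ e |r - rho0 N k η γ j t|) := by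
  have hE : 0 < exp (2 * σ * B) * envelope σ e |r - rho0 N k η γ j t| := by
    unfold envelope
    positivity
  have mem : ∀ i, 1 ≤ i → i ≤ k → i ∈ Finset.Icc 1 k := fun i h1 h2 => Finset.mem_Icc.mpr ⟨h1, h2⟩
  rcases exists_midpoint_interval hk (fun j => rho0 N k η γ j t) r with h | ⟨i, h1, h2, h3, h4⟩ | h
  · rw [hΦ.1 t r hr h]
    have := hq.exp_left_le_envelope he (mem 1 (by omega) (by omega)) (mem 2 (by omega) hk) hj hσ
      (by omega) h
    linarith
  · rw [hΦ.2.1 t r i h1 h2 h3 h4, two_mul]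
    exact add_le_add
      (hq.exp_right_le_envelope he (mem i (by omega) (by omega)) (mem (i - 1) (by omega) (by omega))
        hj hσ (by omega) h3)
      (hq.exp_left_le_envelope he (mem i (by omega) (by omega)) (mem (i + 1) (by omega) (by omega))
        hj hσ (by omega) h4)
  · rw [hΦ.2.2 t r h]
    have := hq.exp_right_le_envelope he (mem k (by omega) le_rfl)
      (mem (k - 1) (by omega) (by omega)) hj hσ (by omega) h
    linarith

theorem exp_neg_le : exp (σ * (-e - |r - rho0 N k η γ j t| - B)) ≤ Φ t r := by
  obtain ⟨hj1, hjk⟩ := Finset.mem_Icc.mp hj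
  have mem : ∀ i, 1 ≤ i → i ≤ k → i ∈ Finset.Icc 1 k := fun i h1 h2 => Finset.mem_Icc.mpr ⟨h1, h2⟩
  have hgap : ∀ l l', 1 ≤ l → l ≤ k → 1 ≤ l' → l' ≤ k → l ≤ l' + 1 →
      rho0 N k η γ l t - rho0 N k η γ l' t ≤ e + B := fun l l' h1 h2 h3 h4 =>
    hq.sub_le_add_of_le_succ he (mem l h1 h2) (mem l' h3 h4)
  have exp_le : ∀ {a}, -e - |r - rho0 N k η γ j t| - B ≤ a →
      exp (σ * (-e - |r - rho0 N k η γ j t| - B)) ≤ exp (σ * a) := fun h =>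
    exp_le_exp.mpr (mul_le_mul_of_nonneg_left h hσ)
  have habs := abs_nonneg (r - rho0 N k η γ j t)
  rcases exists_midpoint_interval hk (fun j => rho0 N k η γ j t) r with h | ⟨i, h1, h2, h3, h4⟩ | h
  · rw [hΦ.1 t r hr h]
    have := hgap 2 j (by omega) hk hj1 hjk (by omega)
    exact exp_le (by linarith [neg_abs_le (r - rho0 N k η γ j t)])
  · rw [hΦ.2.1 t r i h1 h2 h3 h4]
    rcases le_total (rho0 N k η γ i t) r with h5 | h5
    · have := hgap (i + 1) i (by omega) (by omega) (by omega) (by omega) (by omega)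
      exact le_add_of_nonneg_of_le (exp_pos _).le (exp_le (by linarith))
    · have := hgap i (i - 1) (by omega) (by omega) (by omega) (by omega) (by omega)
      exact le_add_of_le_of_nonneg (exp_le (by linarith)) (exp_pos _).le
  · rw [hΦ.2.2 t r h]
    have := hgap j (k - 1) hj1 hjk (by omega) (by omega) (by omega)
    exact exp_le (by linarith [le_abs_self (r - rho0 N k η γ j t)])

end IsPhi

/-! ### The linearized potential near an interface -/

/-- The profile `∑ (-1)^{i+1} w(r - p_i) - 1` with interfaces `p 1, …, p k`. -/
noncomputable def multiProfile (k : ℕ) (p : ℕ → ℝ) (r : ℝ) : ℝ :=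
  (∑ i ∈ Finset.Icc 1 k, (-1 : ℝ) ^ (i + 1) * w (r - p i)) - 1

theorem abs_multiProfile_le (k : ℕ) (p : ℕ → ℝ) (r : ℝ) : |multiProfile k p r| ≤ k + 1 := by
  have h : |∑ i ∈ Finset.Icc 1 k, (-1 : ℝ) ^ (i + 1) * w (r - p i)| ≤ k := by
    refine (Finset.abs_sum_le_sum_abs _ _).trans ?_
    refine (Finset.sum_le_card_nsmul _ _ 1 fun i _ => ?_).trans (by simp)
    rw [abs_mul, abs_neg_one_pow, one_mul]
    exact abs_w_le_one _
  refine (abs_sub _ _).trans ?_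
  rw [abs_one]
  linarith

theorem analyticAt_multiProfile (k : ℕ) (p : ℕ → ℝ) (r : ℝ) :
    AnalyticAt ℝ (multiProfile k p) r := by
  unfold multiProfile
  refine AnalyticAt.sub (Finset.analyticAt_fun_sum _ fun i _ => ?_) analyticAt_const
  exact analyticAt_const.mul ((analyticAt_w _).fun_comp (analyticAt_id.sub analyticAt_const))

theorem sum_Icc_neg_one_pow_mul_sign {j : ℕ} (hj : 1 ≤ j) (n : ℕ) :
    ∑ i ∈ Finset.Icc 1 n, (-1 : ℝ) ^ (i + 1) * (if i < j then 1 else if i = j then 0 else -1) =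
      if n < j then (1 - (-1) ^ n) / 2 else (1 + (-1) ^ n) / 2 := by
  induction n with
  | zero => simp [show 0 < j by omega]
  | succ n ih =>
    rw [Finset.sum_Icc_succ_top (by omega), ih]
    rcases lt_trichotomy (n + 1) j with h | h | h
    · simp only [h, show n < j by omega, if_true]
      ring
    · subst h
      simp only [lt_irrefl, show n < n + 1 by omega, if_true, if_false]
      ring
    · simp only [show ¬ n + 1 < j by omega, show ¬ n < j by omega, show ¬ n + 1 = j by omega,
        if_false]
      ring

section

variable {k j : ℕ} (hk : Even k) (hj : j ∈ Finset.Icc 1 k)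
include hk hj

theorem multiProfile_sub_eq_sum (p : ℕ → ℝ) (r : ℝ) :
    multiProfile k p r - (-1) ^ (j + 1) * w (r - p j) =
      ∑ i ∈ (Finset.Icc 1 k).erase j,
        (-1 : ℝ) ^ (i + 1) * (w (r - p i) - if i < j then 1 else -1) := by
  obtain ⟨hj1, hjk⟩ := Finset.mem_Icc.mp hj
  have hsign := sum_Icc_neg_one_pow_mul_sign hj1 k
  rw [if_neg (by omega), hk.neg_one_pow, ← Finset.add_sum_erase _ _ hj,
    Finset.sum_congr rfl fun i hi => by rw [if_neg (Finset.ne_of_mem_erase hi)]] at hsign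
  simp only [lt_irrefl, if_true, if_false, mul_zero, zero_add] at hsign
  rw [multiProfile, ← Finset.add_sum_erase _ _ hj]
  simp only [mul_sub, Finset.sum_sub_distrib]
  linarith

theorem abs_multiProfile_sub_le {p : ℕ → ℝ} {e B : ℝ} (he : 0 ≤ e) (hp : Spaced k p e B) (r : ℝ) :
    |multiProfile k p r - (-1) ^ (j + 1) * w (r - p j)| ≤
      k * (2 * exp (√2 * (|r - p j| - e + B))) := by
  have hcard : (((Finset.Icc 1 k).erase j).card : ℝ) ≤ k := by
    exact_mod_cast (Finset.card_le_card (Finset.erase_subset _ _)).trans (by simp)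
  rw [multiProfile_sub_eq_sum hk hj]
  refine (Finset.abs_sum_le_sum_abs _ _).trans <| (Finset.sum_le_card_nsmul _ _
    (2 * exp (√2 * (|r - p j| - e + B))) fun i hi => ?_).trans ?_
  · obtain ⟨hij, hi⟩ := Finset.mem_erase.mp hi
    rw [abs_mul, abs_neg_one_pow, one_mul]
    rcases lt_or_gt_of_ne hij with h | h
    · rw [if_pos h]
      refine (abs_w_sub_one_le _).trans ?_
      rw [neg_mul, ← mul_neg]
      have := hp.sub_le_sub_of_lt he hj hi h
      gcongr
      linarith [neg_abs_le (r - p j)]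
    · rw [if_neg (by omega), sub_neg_eq_add]
      refine (abs_w_add_one_le _).trans ?_
      have := hp.sub_le_sub_of_lt he hi hj h
      gcongr
      linarith [le_abs_self (r - p j)]
  · rw [nsmul_eq_mul]
    gcongr

theorem abs_f1_multiProfile_sub_le {p : ℕ → ℝ} {e B : ℝ} (he : 0 ≤ e) (hp : Spaced k p e B)
    (r : ℝ) :
    |f1 (multiProfile k p r) - f1 (w (r - p j))| ≤
      6 * ((k : ℝ) + 2) ^ 2 * exp (√2 * B) * min 1 (exp (√2 * (|r - p j| - e))) := by
  have hB : 0 ≤ B := (abs_nonneg _).trans (hp j hj j hj)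
  set Z := multiProfile k p r
  set s : ℝ := (-1) ^ (j + 1)
  have hZ : |Z| ≤ k + 1 := abs_multiProfile_le k p r
  have hs : s ^ 2 = 1 := by rw [← pow_mul, mul_comm, pow_mul, neg_one_sq, one_pow]
  have hsw : |s * w (r - p j)| ≤ 1 := by
    rw [abs_mul, abs_neg_one_pow, one_mul]
    exact abs_w_le_one _
  have hadd : |Z + s * w (r - p j)| ≤ k + 2 := (abs_add_le _ _).trans (by linarith)
  have hsub : |Z - s * w (r - p j)| ≤
      2 * ((k : ℝ) + 2) * exp (√2 * B) * min 1 (exp (√2 * (|r - p j| - e))) := by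
    rw [mul_min_of_nonneg _ _ (by positivity)]
    refine le_min ?_ ((abs_multiProfile_sub_le hk hj he hp r).trans ?_)
    · have : 1 ≤ exp (√2 * B) := one_le_exp (by positivity)
      have : |Z - s * w (r - p j)| ≤ k + 2 := (abs_sub _ _).trans (by linarith)
      nlinarith
    · rw [mul_add √2, exp_add]
      have := mul_pos (exp_pos (√2 * B)) (exp_pos (√2 * (|r - p j| - e)))
      nlinarith
  calc |f1 Z - f1 (w (r - p j))|
      = 3 * |Z + s * w (r - p j)| * |Z - s * w (r - p j)| := by
        rw [f1_eq, f1_eq, ← abs_of_pos (show (0 : ℝ) < 3 by norm_num), ← abs_mul, ← abs_mul,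
          ← abs_neg]
        congr 1
        linear_combination (3 * w (r - p j) ^ 2) * hs
    _ ≤ 3 * ((k : ℝ) + 2) *
        (2 * ((k : ℝ) + 2) * exp (√2 * B) * min 1 (exp (√2 * (|r - p j| - e)))) := by gcongr
    _ = _ := by ring

end

/-! ### Diagonally dominant systems -/

section

variable {n 𝕜 : Type*} [Fintype n] [DecidableEq n] [NormedField 𝕜] {A : Matrix n n 𝕜} {m : n → ℝ}
  {K : ℝ} (hm : ∀ j, 0 < m j) (hA : ∀ j, ∑ i ∈ Finset.univ.erase j, ‖A j i‖ + m j ≤ ‖A j j‖)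
include hm hA

theorem norm_le_of_norm_mulVec_le_of_diag_dominant {d : n → 𝕜}
    (hd : ∀ j, ‖A.mulVec d j‖ ≤ K * m j) (i : n) : ‖d i‖ ≤ K := by
  obtain ⟨j, -, hmax⟩ := Finset.univ.exists_max_image (‖d ·‖) ⟨i, Finset.mem_univ i⟩
  have hsplit : A j j * d j = A.mulVec d j - ∑ l ∈ Finset.univ.erase j, A j l * d l := by
    rw [Matrix.mulVec, dotProduct, ← Finset.add_sum_erase _ _ (Finset.mem_univ j)]
    ring
  have hoff : ‖∑ l ∈ Finset.univ.erase j, A j l * d l‖ ≤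
      (∑ l ∈ Finset.univ.erase j, ‖A j l‖) * ‖d j‖ := by
    rw [Finset.sum_mul]
    refine norm_sum_le_of_le _ fun l _ => ?_
    rw [norm_mul]
    exact mul_le_mul_of_nonneg_left (hmax l (Finset.mem_univ l)) (norm_nonneg _)
  have hdiag : ‖A j j‖ * ‖d j‖ ≤ K * m j + (∑ l ∈ Finset.univ.erase j, ‖A j l‖) * ‖d j‖ := by
    rw [← norm_mul, hsplit]
    exact (norm_sub_le _ _).trans (add_le_add (hd j) hoff)
  have := mul_le_mul_of_nonneg_right (hA j) (norm_nonneg (d j))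
  exact (hmax i (Finset.mem_univ i)).trans (le_of_mul_le_mul_right (by linarith) (hm j))

theorem exists_mulVec_eq_of_diag_dominant {b : n → 𝕜} (hb : ∀ j, ‖b j‖ ≤ K * m j) :
    ∃ d : n → 𝕜, A.mulVec d = b ∧ ∀ i, ‖d i‖ ≤ K := by
  have hdet : A.det ≠ 0 :=
    det_ne_zero_of_sum_row_lt_diag fun j => by linarith [hA j, hm j]
  have hsol : A.mulVec (A⁻¹.mulVec b) = b := by
    rw [Matrix.mulVec_mulVec, Matrix.mul_nonsing_inv _ (isUnit_iff_ne_zero.mpr hdet),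
      Matrix.one_mulVec]
  exact ⟨_, hsol, norm_le_of_norm_mulVec_le_of_diag_dominant hm hA (by rwa [hsol])⟩

end

theorem exists_sum_mul_eq_of_diag_dominant {ι 𝕜 : Type*} [DecidableEq ι] [NormedField 𝕜]
    {s : Finset ι} {A : ι → ι → 𝕜} {b : ι → 𝕜} {m : ι → ℝ} {K : ℝ} (hm : ∀ j ∈ s, 0 < m j)
    (hA : ∀ j ∈ s, ∑ i ∈ s.erase j, ‖A i j‖ + m j ≤ ‖A j j‖) (hb : ∀ j ∈ s, ‖b j‖ ≤ K * m j) :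
    ∃ d : ι → 𝕜, (∀ j ∈ s, ∑ i ∈ s, d i * A i j = b j) ∧ ∀ i ∈ s, ‖d i‖ ≤ K := by
  have hsum : ∀ j : s, ∑ i ∈ Finset.univ.erase j, ‖A i j‖ = ∑ i ∈ s.erase j, ‖A i j‖ := fun j => by
    rw [Finset.sum_erase_eq_sub (f := fun i : s => ‖A i j‖) (Finset.mem_univ j),
      Finset.sum_erase_eq_sub (f := fun i => ‖A i j‖) j.2, Finset.sum_coe_sort s (‖A · j‖)]
  obtain ⟨d, hd, hdK⟩ := exists_mulVec_eq_of_diag_dominant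
    (A := Matrix.of fun j i : s => A i j) (b := fun j : s => b j) (fun j => hm j j.2)
    (fun j => by simpa only [Matrix.of_apply, hsum] using hA j j.2) (fun j => hb j j.2)
  refine ⟨fun i => if h : i ∈ s then d ⟨i, h⟩ else 0, fun j hj => ?_, fun i hi => ?_⟩
  · rw [← congrFun hd ⟨j, hj⟩, ← Finset.sum_coe_sort s]
    simp [Matrix.mulVec, dotProduct, mul_comm]
  · simpa only [hi, dite_true] using hdK _

/-! ### Integrals against analytic functions -/

section

variable {ψ F G : ℝ → ℝ} {U : Set ℝ} (hF : ∀ x, AnalyticAt ℝ F x)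
include hF

theorem aestronglyMeasurable_of_integrableOn_mul {x₀ : ℝ} (hx₀ : F x₀ ≠ 0)
    (h : IntegrableOn (fun y => ψ y * F y) U) : AEStronglyMeasurable ψ (volume.restrict U) := by
  have hne : ∀ᵐ y ∂volume.restrict U, F y ≠ 0 := by
    have hcod := AnalyticOnNhd.preimage_zero_mem_codiscrete (fun x _ => hF x) hx₀
    have := ae_restrict_le_codiscreteWithin (μ := (volume : Measure ℝ)) .univ hcod
    rw [Measure.restrict_univ] at this
    exact ae_restrict_of_ae this
  have hcont : Continuous F := continuous_iff_continuousAt.mpr fun x => (hF x).continuousAt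
  refine (h.aestronglyMeasurable.mul hcont.measurable.inv.aestronglyMeasurable).congr ?_
  filter_upwards [hne] with y hy
  simp [hy]

theorem setIntegral_mul_eq_zero_of_not_aestronglyMeasurable
    (hψ : ¬AEStronglyMeasurable ψ (volume.restrict U)) : ∫ y in U, ψ y * F y = 0 := by
  by_cases h : ∃ x₀, F x₀ ≠ 0
  · obtain ⟨x₀, hx₀⟩ := h
    exact integral_undef fun h => hψ (aestronglyMeasurable_of_integrableOn_mul hF hx₀ h)
  · push Not at h
    simp [h]

/- For a non-measurable `ψ` each integral has the junk value `0` unless its analytic factor vanishes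
identically, because otherwise that factor has only countably many zeros. -/
theorem setIntegral_mul_add_setIntegral_mul (hG : ∀ x, AnalyticAt ℝ G x) {φ : ℝ → ℝ}
    (hU : MeasurableSet U) (hφ : IntegrableOn φ U) (hψF : ∀ y ∈ U, |ψ y * F y| ≤ φ y)
    (hψG : ∀ y ∈ U, |ψ y * G y| ≤ φ y) :
    (∫ y in U, ψ y * F y) + ∫ y in U, ψ y * G y = ∫ y in U, ψ y * (F y + G y) := by
  by_cases hψ : AEStronglyMeasurable ψ (volume.restrict U)
  · have hint : ∀ {H : ℝ → ℝ}, (∀ x, AnalyticAt ℝ H x) → (∀ y ∈ U, |ψ y * H y| ≤ φ y) →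
        IntegrableOn (fun y => ψ y * H y) U := fun {H} hH hle =>
      have hcont : Continuous H := continuous_iff_continuousAt.mpr fun x => (hH x).continuousAt
      hφ.mono' (hψ.mul hcont.aestronglyMeasurable) ((ae_restrict_mem hU).mono hle)
    rw [← integral_add (hint hF hψF) (hint hG hψG)]
    simp only [mul_add]
  · rw [setIntegral_mul_eq_zero_of_not_aestronglyMeasurable hF hψ,
      setIntegral_mul_eq_zero_of_not_aestronglyMeasurable hG hψ,
      setIntegral_mul_eq_zero_of_not_aestronglyMeasurable (F := fun y => F y + G y)
        (fun x => (hF x).add (hG x)) hψ, add_zero]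

end

/-! ### The right-hand side of the projection system -/

theorem envelope_mul_exp_le {σ : ℝ} (hσ : 0 ≤ σ) (e a x : ℝ) :
    envelope σ e x * exp (-a * x) ≤ exp (-σ * e) * exp (-(a - σ) * x) := by
  rw [envelope, ← exp_add, ← exp_add]
  have := mul_le_mul_of_nonneg_left (min_le_left x (e / 2)) hσ
  exact exp_le_exp.mpr (by linarith)

theorem envelope_mul_min_le {σ : ℝ} (hσ : 0 ≤ σ) (hσ2 : σ ≤ √2) (e : ℝ) {x : ℝ} (hx : 0 ≤ x) :
    envelope σ e x * min 1 (exp (√2 * (x - e))) ≤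
      exp (-σ * e) * exp (-(√2 / 2) * e) * exp ((√2 + σ) / 2 * x) := by
  rw [envelope, ← exp_add, ← exp_add]
  have hmul_le : ∀ {m b : ℝ}, min x (e / 2) ≤ m → min 1 (exp (√2 * (x - e))) ≤ exp b →
      σ * (m - e) + b ≤ -σ * e + -(√2 / 2) * e + (√2 + σ) / 2 * x →
      exp (σ * (min x (e / 2) - e)) * min 1 (exp (√2 * (x - e))) ≤
        exp (-σ * e + -(√2 / 2) * e + (√2 + σ) / 2 * x) := fun {m b} hm hb hle =>
    (mul_le_mul (exp_le_exp.mpr (by gcongr)) hb (by positivity) (exp_pos _).le).trans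
      ((exp_add _ _).symm.trans_le (exp_le_exp.mpr hle))
  rcases le_total x (e / 2) with _ | _
  · exact hmul_le (min_le_left _ _) (min_le_right _ _) (by nlinarith)
  rcases le_total e x with _ | _
  · exact hmul_le (b := 0) (min_le_right _ _) (by simp) (by nlinarith)
  · exact hmul_le (min_le_right _ _) (min_le_right _ _) (by nlinarith)

theorem abs_mul_le_interfaceWeight {N : ℕ} {σ e p y a A M u v : ℝ} (hσ : 0 ≤ σ)
    (hu : |u| ≤ A * envelope σ e |Rr N y - p|) (hv : |v| ≤ M * interfaceWeight N a p y) :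
    |u * v| ≤ A * M * exp (-σ * e) * interfaceWeight N (a - σ) p y := by
  have hA : 0 ≤ A := nonneg_of_mul_nonneg_left ((abs_nonneg _).trans hu) (exp_pos _)
  have hM : 0 ≤ M := nonneg_of_mul_nonneg_left ((abs_nonneg _).trans hv) (interfaceWeight_pos ..)
  have := Rr_pos N y
  calc |u * v| ≤ A * envelope σ e |Rr N y - p| * (M * interfaceWeight N a p y) := by
        rw [abs_mul]
        exact mul_le_mul hu hv (abs_nonneg _) ((abs_nonneg _).trans hu)
    _ = A * M * Rr N y * (envelope σ e |Rr N y - p| * exp (-a * |Rr N y - p|)) := by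
        rw [interfaceWeight]; ring
    _ ≤ A * M * Rr N y * (exp (-σ * e) * exp (-(a - σ) * |Rr N y - p|)) := by
        refine mul_le_mul_of_nonneg_left (envelope_mul_exp_le hσ ..) (by positivity)
    _ = _ := by rw [interfaceWeight]; ring

theorem abs_w1_mul_Rr_le (N : ℕ) (p y : ℝ) :
    |w1 (Rr N y - p) * Rr N y| ≤ 4 * interfaceWeight N √2 p y := by
  rw [abs_mul, abs_of_pos (w1_pos _), abs_of_pos (Rr_pos N y), interfaceWeight, ← mul_assoc]
  exact mul_le_mul_of_nonneg_right (w1_le _) (Rr_pos N y).le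

theorem abs_w2_mul_Rr_le (N : ℕ) (p y : ℝ) :
    |w2 (Rr N y - p) * Rr N y| ≤ 8 * interfaceWeight N √2 p y := by
  rw [abs_mul, abs_of_pos (Rr_pos N y), interfaceWeight, ← mul_assoc]
  exact mul_le_mul_of_nonneg_right (abs_w2_le _) (Rr_pos N y).le

/-- What remains of `(N - 1) ∂_y (w″(r(y) - p) y)` after cancelling the potential term
`f′(w) w′ r`. It has no factor `r`, hence is smaller than the other terms by a factor `1 / p`. -/
noncomputable def lowerOrder (N : ℕ) (p y : ℝ) : ℝ :=
  f1 (w (Rr N y - p)) * w1 (Rr N y - p) * (Rr N y / (1 + y ^ 2)) + ((N : ℝ) - 1) * w2 (Rr N y - p)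

theorem analyticAt_deriv_w2_comp_Rr_mul (N : ℕ) (p y : ℝ) :
    AnalyticAt ℝ (deriv fun s => w2 (Rr N s - p) * s) y :=
  (((analyticAt_w2 _).fun_comp ((analyticAt_Rr N y).sub analyticAt_const)).mul analyticAt_id).deriv

section

variable {N : ℕ} (hN : 2 ≤ N)
include hN

theorem sub_one_mul_deriv_w2_comp_Rr_mul (p y : ℝ) :
    ((N : ℝ) - 1) * deriv (fun s => w2 (Rr N s - p) * s) y =
      lowerOrder N p y - f1 (w (Rr N y - p)) * w1 (Rr N y - p) * Rr N y := by
  have := sub_one_pos_of_two_le hN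
  have : (0 : ℝ) < 1 + y ^ 2 := by positivity
  have hderiv := ((hasDerivAt_w2 (Rr N y - p)).comp y ((hasDerivAt_Rr N y).sub_const p)).mul
    (hasDerivAt_id y)
  rw [lowerOrder, show deriv (fun s => w2 (Rr N s - p) * s) y = _ from hderiv.deriv]
  simp only [Function.comp_apply, id]
  field_simp
  ring

theorem Rr_div_one_add_sq_le_one (y : ℝ) : Rr N y / (1 + y ^ 2) ≤ 1 := by
  have h := one_le_Rr hN y
  have : Rr N y ≤ Rr N y ^ (N - 1) := le_self_pow₀ h (by omega)
  rw [div_le_one (by positivity), ← Rr_pow_sq hN y]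
  nlinarith

theorem abs_lowerOrder_le (p y : ℝ) : |lowerOrder N p y| ≤ 8 * N * exp (-√2 * |Rr N y - p|) := by
  have hM := sub_one_pos_of_two_le hN
  have hr := Rr_pos N y
  have hw1 := w1_pos (Rr N y - p)
  calc |lowerOrder N p y|
      ≤ |f1 (w (Rr N y - p))| * w1 (Rr N y - p) * (Rr N y / (1 + y ^ 2)) +
        ((N : ℝ) - 1) * |w2 (Rr N y - p)| := by
        refine (abs_add_le _ _).trans_eq ?_
        rw [abs_mul, abs_mul, abs_mul, abs_of_pos hw1, abs_of_pos hM,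
          abs_of_pos (by positivity : 0 < Rr N y / (1 + y ^ 2))]
    _ ≤ 2 * (4 * exp (-√2 * |Rr N y - p|)) * 1 +
        ((N : ℝ) - 1) * (8 * exp (-√2 * |Rr N y - p|)) := by
        gcongr
        exacts [abs_f1_le_two (abs_w_le_one _), w1_le _, Rr_div_one_add_sq_le_one hN y,
          abs_w2_le _]
    _ = _ := by ring

theorem exists_exp_le_div_mul_interfaceWeight {κ : ℝ} (hκ : 0 < κ) (a : ℝ) :
    ∃ C > 0, ∀ p : ℝ, 1 ≤ p → ∀ y,
      exp (-a * |Rr N y - p|) ≤ C / p * interfaceWeight N (a - κ) p y := by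
  obtain ⟨C, hC, hle⟩ := exists_one_add_pow_le 1 hκ
  refine ⟨C, hC, fun p hp y => ?_⟩
  have hr := one_le_Rr hN y
  have hp_le : p ≤ C * exp (κ * |Rr N y - p|) * Rr N y :=
    calc p ≤ (1 + |Rr N y - p|) * Rr N y := by
          nlinarith [neg_abs_le (Rr N y - p), abs_nonneg (Rr N y - p)]
      _ ≤ _ := by
          gcongr
          simpa only [pow_one] using hle _ (abs_nonneg (Rr N y - p))
  rw [interfaceWeight, div_mul_eq_mul_div, le_div_iff₀ (by linarith)]
  calc exp (-a * |Rr N y - p|) * p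
      ≤ exp (-a * |Rr N y - p|) * (C * exp (κ * |Rr N y - p|) * Rr N y) := by gcongr
    _ = C * (exp (-a * |Rr N y - p|) * exp (κ * |Rr N y - p|)) * Rr N y := by ring
    _ = _ := by rw [← exp_add]; ring_nf

theorem abs_sub_one_mul_deriv_w2_comp_Rr_mul_le (p y : ℝ) :
    |((N : ℝ) - 1) * deriv (fun s => w2 (Rr N s - p) * s) y| ≤
      (8 * N + 8) * interfaceWeight N √2 p y := by
  have hlow : |lowerOrder N p y| ≤ 8 * N * interfaceWeight N √2 p y :=
    (abs_lowerOrder_le hN p y).trans (by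
      gcongr
      exact le_mul_of_one_le_right (exp_pos _).le (one_le_Rr hN y))
  have hmain : |f1 (w (Rr N y - p)) * w1 (Rr N y - p) * Rr N y| ≤
      2 * (4 * interfaceWeight N √2 p y) := by
    rw [mul_assoc, abs_mul]
    gcongr
    exacts [abs_f1_le_two (abs_w_le_one _), abs_w1_mul_Rr_le N p y]
  rw [sub_one_mul_deriv_w2_comp_Rr_mul hN]
  linarith [abs_sub (lowerOrder N p y) (f1 (w (Rr N y - p)) * w1 (Rr N y - p) * Rr N y)]

theorem exists_abs_setIntegral_mul_le {σ a : ℝ} (hσ : 0 ≤ σ) (ha : σ < a) :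
    ∃ C > 0, ∀ p : ℝ, 1 ≤ p → ∀ (e A M : ℝ) (u v : ℝ → ℝ), 0 ≤ A → 0 ≤ M →
      (∀ y, 0 < y → |u y| ≤ A * envelope σ e |Rr N y - p|) →
      (∀ y, |v y| ≤ M * interfaceWeight N a p y) →
      |∫ y in Set.Ioi (0 : ℝ), u y * v y| ≤ C * (A * M * exp (-σ * e)) * p ^ (N - 1) := by
  obtain ⟨C, hC, hle⟩ := exists_abs_setIntegral_le hN (sub_pos.mpr ha)
  exact ⟨C, hC, fun p hp e A M u v hA hM hu hv => hle p hp _ _ (by positivity)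
    fun y hy => abs_mul_le_interfaceWeight hσ (hu y hy) (hv y)⟩

end

section

variable {σ e A D p : ℝ} {Z ψ : ℝ → ℝ} {N : ℕ}
  (hZ_near : ∀ r, |f1 (Z r) - f1 (w (r - p))| ≤ D * min 1 (exp (√2 * (|r - p| - e))))
include hZ_near

theorem abs_f1_mul_w1_mul_Rr_le (y : ℝ) :
    |f1 (Z (Rr N y)) * w1 (Rr N y - p) * Rr N y| ≤
      4 * (D + 2) * interfaceWeight N √2 p y := by
  have hD : 0 ≤ D :=
    nonneg_of_mul_nonneg_left ((abs_nonneg _).trans (hZ_near 0)) (lt_min one_pos (exp_pos _))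
  have hf1 : |f1 (Z (Rr N y))| ≤ D + 2 := by
    have h := (hZ_near (Rr N y)).trans (mul_le_of_le_one_right hD (min_le_left _ _))
    have hw := abs_f1_le_two (abs_w_le_one (Rr N y - p))
    linarith [abs_sub_abs_le_abs_sub (f1 (Z (Rr N y))) (f1 (w (Rr N y - p)))]
  rw [mul_assoc, abs_mul]
  refine (mul_le_mul hf1 (abs_w1_mul_Rr_le N p y) (abs_nonneg _) (by linarith)).trans_eq ?_
  ring

theorem abs_mul_f1_sub_mul_w1_le (hσ : 0 ≤ σ) (hσ2 : σ ≤ √2) {u y : ℝ}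
    (hu : |u| ≤ A * envelope σ e |Rr N y - p|) :
    |u * ((f1 (Z (Rr N y)) - f1 (w (Rr N y - p))) * w1 (Rr N y - p) * Rr N y)| ≤
      4 * D * A * exp (-σ * e) * exp (-(√2 / 2) * e) *
        interfaceWeight N ((√2 - σ) / 2) p y := by
  have hA : 0 ≤ A := nonneg_of_mul_nonneg_left ((abs_nonneg _).trans hu) (exp_pos _)
  have hD : 0 ≤ D :=
    nonneg_of_mul_nonneg_left ((abs_nonneg _).trans (hZ_near 0)) (lt_min one_pos (exp_pos _))
  have hr := Rr_pos N y
  have hw1 := w1_pos (Rr N y - p)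
  set x := |Rr N y - p| with hx
  calc |u * ((f1 (Z (Rr N y)) - f1 (w (Rr N y - p))) * w1 (Rr N y - p) * Rr N y)|
      = |u| * (|f1 (Z (Rr N y)) - f1 (w (Rr N y - p))| * w1 (Rr N y - p) * Rr N y) := by
        rw [abs_mul, abs_mul, abs_mul, abs_of_pos hw1, abs_of_pos hr]
    _ ≤ A * envelope σ e x * (D * min 1 (exp (√2 * (x - e))) * (4 * exp (-√2 * x)) * Rr N y) := by
        gcongr
        exacts [(abs_nonneg _).trans hu, hZ_near _, w1_le _]
    _ = 4 * D * A * exp (-√2 * x) * Rr N y *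
        (envelope σ e x * min 1 (exp (√2 * (x - e)))) := by ring
    _ ≤ 4 * D * A * exp (-√2 * x) * Rr N y *
        (exp (-σ * e) * exp (-(√2 / 2) * e) * exp ((√2 + σ) / 2 * x)) := by
        exact mul_le_mul_of_nonneg_left (envelope_mul_min_le hσ hσ2 e (abs_nonneg _))
          (by positivity)
    _ = 4 * D * A * exp (-σ * e) * exp (-(√2 / 2) * e) *
        (exp (-√2 * x) * exp ((√2 + σ) / 2 * x) * Rr N y) := by ring
    _ = _ := by rw [interfaceWeight, ← hx, ← exp_add]; ring_nf

theorem setIntegral_deriv_add_setIntegral_f1 (hN : 2 ≤ N) (hσ : 0 ≤ σ) (hσ2 : σ < √2) (hp : 1 ≤ p)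
    (hZ : ∀ r, AnalyticAt ℝ Z r)
    (hψ : ∀ y, 0 < y → |ψ y| ≤ A * envelope σ e |Rr N y - p|) :
    ((N : ℝ) - 1) * (∫ y in Set.Ioi (0 : ℝ), ψ y * deriv (fun s => w2 (Rr N s - p) * s) y) +
        ∫ y in Set.Ioi (0 : ℝ), f1 (Z (Rr N y)) * ψ y * w1 (Rr N y - p) * Rr N y =
      ∫ y in Set.Ioi (0 : ℝ), ψ y *
        ((f1 (Z (Rr N y)) - f1 (w (Rr N y - p))) * w1 (Rr N y - p) * Rr N y +
          lowerOrder N p y) := by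
  have hR := analyticAt_Rr N
  have hf1Z : ∀ y, AnalyticAt ℝ (fun y => f1 (Z (Rr N y))) y := fun y => by
    simp only [f1_eq]
    exact analyticAt_const.sub (analyticAt_const.mul (((hZ _).fun_comp (hR y)).pow 2))
  obtain ⟨C, -, hint⟩ := exists_integral_interfaceWeight_le hN (sub_pos.mpr hσ2)
  have hM : ∀ y, (8 * N + 8) * interfaceWeight N √2 p y ≤
      max (8 * (N : ℝ) + 8) (4 * (D + 2)) * interfaceWeight N √2 p y ∧
      4 * (D + 2) * interfaceWeight N √2 p y ≤
      max (8 * (N : ℝ) + 8) (4 * (D + 2)) * interfaceWeight N √2 p y := fun y =>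
    ⟨mul_le_mul_of_nonneg_right (le_max_left _ _) (interfaceWeight_pos ..).le,
      mul_le_mul_of_nonneg_right (le_max_right _ _) (interfaceWeight_pos ..).le⟩
  have hadd := setIntegral_mul_add_setIntegral_mul
    (F := fun y => ((N : ℝ) - 1) * deriv (fun s => w2 (Rr N s - p) * s) y)
    (G := fun y => f1 (Z (Rr N y)) * w1 (Rr N y - p) * Rr N y) (U := Set.Ioi 0)
    (fun y => analyticAt_const.mul (analyticAt_deriv_w2_comp_Rr_mul N p y))
    (fun y => ((hf1Z y).mul
      ((analyticAt_w1 _).fun_comp ((hR y).sub analyticAt_const))).mul (hR y))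
    measurableSet_Ioi ((hint p hp).1.const_mul _)
    (fun y hy => abs_mul_le_interfaceWeight hσ (hψ y hy)
      ((abs_sub_one_mul_deriv_w2_comp_Rr_mul_le hN p y).trans (hM y).1))
    (fun y hy => abs_mul_le_interfaceWeight hσ (hψ y hy)
      ((abs_f1_mul_w1_mul_Rr_le hZ_near y).trans (hM y).2))
  rw [← integral_const_mul]
  refine (congrArg₂ (· + ·) ?_ ?_).trans (hadd.trans ?_) <;>
    refine integral_congr_ae (.of_forall fun y => ?_) <;> dsimp only
  · ring
  · ring
  · rw [sub_one_mul_deriv_w2_comp_Rr_mul hN]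
    ring

end

/-- The right-hand side of the `j`-th equation of the projection system, at a fixed time, as a
function of the position `p` and the velocity `v` of the `j`-th interface. -/
noncomputable def projRhs (N : ℕ) (Z : ℝ → ℝ) (v p : ℝ) (ψ g : ℝ → ℝ) : ℝ :=
  -v * (∫ y in Set.Ioi (0 : ℝ), ψ y * w2 (Rr N y - p) * Rr N y) +
    ((N : ℝ) - 1) * (∫ y in Set.Ioi (0 : ℝ), ψ y * deriv (fun s => w2 (Rr N s - p) * s) y) +
    (∫ y in Set.Ioi (0 : ℝ), f1 (Z (Rr N y)) * ψ y * w1 (Rr N y - p) * Rr N y) +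
    ∫ y in Set.Ioi (0 : ℝ), g y * w1 (Rr N y - p) * Rr N y

theorem projSystem_iff {N k : ℕ} {ρ : ℕ → ℝ → ℝ} {z ψ g : ℝ → ℝ → ℝ} {d : ℕ → ℝ → ℝ} {t : ℝ} :
    ProjSystem N k ρ z ψ g d t ↔ ∀ j ∈ Finset.Icc 1 k,
      ∑ i ∈ Finset.Icc 1 k, d i t * overlap N (ρ i t) (ρ j t) =
        projRhs N (z t) (deriv (ρ j) t) (ρ j t) (ψ t) (g t) :=
  Iff.rfl

section

variable {N : ℕ} (hN : 2 ≤ N) {σ : ℝ} (hσ : 0 ≤ σ) (hσ2 : σ < √2)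
include hN hσ hσ2

theorem exists_abs_mul_lowerOrder_le :
    ∃ C > 0, ∀ p : ℝ, 1 ≤ p → ∀ e A u y : ℝ, |u| ≤ A * envelope σ e |Rr N y - p| →
      |u * lowerOrder N p y| ≤
        C * A * exp (-σ * e) * (1 / p) * interfaceWeight N ((√2 - σ) / 2) p y := by
  obtain ⟨C, hC, hle⟩ := exists_exp_le_div_mul_interfaceWeight hN
    (half_pos (sub_pos.mpr hσ2)) √2
  refine ⟨8 * N * C, by positivity, fun p hp e A u y hu => ?_⟩
  have hlow : |lowerOrder N p y| ≤
      8 * N * (C / p) * interfaceWeight N (√2 - (√2 - σ) / 2) p y := by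
    rw [mul_assoc _ (C / p)]
    exact (abs_lowerOrder_le hN p y).trans (by gcongr; exact hle p hp y)
  have hmul := abs_mul_le_interfaceWeight hσ hu hlow
  rw [show √2 - (√2 - σ) / 2 - σ = (√2 - σ) / 2 by ring] at hmul
  exact hmul.trans_eq (by ring)

theorem exists_abs_linear_part_le {D : ℝ} (hD : 0 < D) :
    ∃ C > 0, ∀ p : ℝ, 1 ≤ p → ∀ (e A : ℝ) (ψ Z : ℝ → ℝ), 0 ≤ A →
      (∀ r, AnalyticAt ℝ Z r) →
      (∀ r, |f1 (Z r) - f1 (w (r - p))| ≤ D * min 1 (exp (√2 * (|r - p| - e)))) →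
      (∀ y, 0 < y → |ψ y| ≤ A * envelope σ e |Rr N y - p|) →
      |((N : ℝ) - 1) * (∫ y in Set.Ioi (0 : ℝ), ψ y * deriv (fun s => w2 (Rr N s - p) * s) y) +
        ∫ y in Set.Ioi (0 : ℝ), f1 (Z (Rr N y)) * ψ y * w1 (Rr N y - p) * Rr N y| ≤
        C * (A * exp (-σ * e) * (exp (-(√2 / 2) * e) + 1 / p)) * p ^ (N - 1) := by
  obtain ⟨C₁, hC₁, hlow⟩ := exists_abs_mul_lowerOrder_le hN hσ hσ2
  obtain ⟨C, hC, hle⟩ := exists_abs_setIntegral_le hN (half_pos (sub_pos.mpr hσ2))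
  refine ⟨C * (4 * D + C₁), by positivity, fun p hp e A ψ Z hA hZ hZ_near hψ => ?_⟩
  rw [setIntegral_deriv_add_setIntegral_f1 hZ_near hN hσ hσ2 hp hZ hψ, mul_assoc C]
  refine hle p hp _ _ (by positivity) fun y hy => ?_
  have hweight := interfaceWeight_pos N ((√2 - σ) / 2) p y
  calc _ ≤ 4 * D * A * exp (-σ * e) * exp (-(√2 / 2) * e) *
          interfaceWeight N ((√2 - σ) / 2) p y +
        C₁ * A * exp (-σ * e) * (1 / p) * interfaceWeight N ((√2 - σ) / 2) p y := by
        rw [mul_add]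
        exact (abs_add_le _ _).trans (add_le_add
          (abs_mul_f1_sub_mul_w1_le hZ_near hσ hσ2.le (hψ y hy)) (hlow p hp e A _ y (hψ y hy)))
    _ = A * exp (-σ * e) * (4 * D * exp (-(√2 / 2) * e) + C₁ * (1 / p)) *
        interfaceWeight N ((√2 - σ) / 2) p y := by ring
    _ ≤ A * exp (-σ * e) * ((4 * D + C₁) * exp (-(√2 / 2) * e) + (4 * D + C₁) * (1 / p)) *
        interfaceWeight N ((√2 - σ) / 2) p y := by
        gcongr <;> linarith
    _ = _ := by ring

theorem exists_abs_projRhs_le {D : ℝ} (hD : 0 < D) :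
    ∃ C > 0, ∀ p : ℝ, 1 ≤ p → ∀ (e v Ψ G : ℝ) (ψ g Z : ℝ → ℝ), 0 ≤ Ψ → 0 ≤ G →
      (∀ r, AnalyticAt ℝ Z r) →
      (∀ r, |f1 (Z r) - f1 (w (r - p))| ≤ D * min 1 (exp (√2 * (|r - p| - e)))) →
      (∀ y, 0 < y → |ψ y| ≤ Ψ * envelope σ e |Rr N y - p|) →
      (∀ y, 0 < y → |g y| ≤ G * envelope σ e |Rr N y - p|) →
      |projRhs N Z v p ψ g| ≤
        C * (exp (-σ * e) * ((|v| + exp (-(√2 / 2) * e) + 1 / p) * Ψ + G)) * p ^ (N - 1) := by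
  obtain ⟨C₁, hC₁, hint⟩ := exists_abs_setIntegral_mul_le hN hσ hσ2
  obtain ⟨C₂, hC₂, hlin⟩ := exists_abs_linear_part_le hN hσ hσ2 hD
  refine ⟨8 * C₁ + C₂, by positivity,
    fun p hp e v Ψ G ψ g Z hΨ hG hZ hZ_near hψ hg => ?_⟩
  have hw2 := hint p hp e Ψ 8 ψ _ hΨ (by norm_num) hψ (abs_w2_mul_Rr_le N p)
  have hw1 := hint p hp e G 4 g _ hG (by norm_num) hg (abs_w1_mul_Rr_le N p)
  have hlin := hlin p hp e Ψ ψ Z hΨ hZ hZ_near hψ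
  simp only [← mul_assoc] at hw1 hw2
  rw [projRhs, add_assoc (-v * _)]
  refine (abs_add_le _ _).trans ((add_le_add_left (abs_add_le _ _) _).trans ?_)
  rw [abs_mul, abs_neg]
  have hvw2 := mul_le_mul_of_nonneg_left hw2 (abs_nonneg v)
  refine (add_le_add (add_le_add hvw2 hlin) hw1).trans ?_
  have hnonneg : 0 ≤ (C₂ * |v| * Ψ + 8 * C₁ * ((exp (-(√2 / 2) * e) + 1 / p) * Ψ) +
      (4 * C₁ + C₂) * G) * (exp (-σ * e) * p ^ (N - 1)) := by positivity
  linarith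

end

/-! ### Solvability of the projection system at a fixed time -/

theorem overlap_nonneg (N : ℕ) (p q : ℝ) : 0 ≤ overlap N p q :=
  integral_nonneg fun y => by
    have := w1_pos (Rr N y - p)
    have := w1_pos (Rr N y - q)
    have := Rr_pos N y
    positivity

theorem abs_w1_mul_w1_mul_Rr_le_of_le_abs_sub {N : ℕ} {p q a : ℝ} (hpq : a ≤ |p - q|) (y : ℝ) :
    |w1 (Rr N y - p) * w1 (Rr N y - q) * Rr N y| ≤
      16 * exp (-(√2 / 2) * a) * interfaceWeight N (√2 / 2) q y := by
  have hr := Rr_pos N y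
  have hp := w1_pos (Rr N y - p)
  have hq := w1_pos (Rr N y - q)
  have hdist : a ≤ |Rr N y - p| + |Rr N y - q| := by
    rw [abs_sub_comm _ p]
    exact hpq.trans (abs_sub_le _ _ _)
  have hexp : exp (-√2 * |Rr N y - p|) * exp (-√2 * |Rr N y - q|) ≤
      exp (-(√2 / 2) * a) * exp (-(√2 / 2) * |Rr N y - q|) := by
    rw [← exp_add, ← exp_add, exp_le_exp]
    have : 0 ≤ √2 / 2 * |Rr N y - p| := by positivity
    linarith [mul_le_mul_of_nonneg_left hdist (show 0 ≤ √2 / 2 by positivity)]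
  rw [abs_of_pos (by positivity), interfaceWeight]
  calc w1 (Rr N y - p) * w1 (Rr N y - q) * Rr N y
      ≤ 4 * exp (-√2 * |Rr N y - p|) * (4 * exp (-√2 * |Rr N y - q|)) * Rr N y := by
        gcongr
        exacts [w1_le _, w1_le _]
    _ = 16 * Rr N y * (exp (-√2 * |Rr N y - p|) * exp (-√2 * |Rr N y - q|)) := by ring
    _ ≤ 16 * Rr N y * (exp (-(√2 / 2) * a) * exp (-(√2 / 2) * |Rr N y - q|)) := by gcongr
    _ = _ := by ring

section

variable {N : ℕ} (hN : 2 ≤ N)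
include hN

theorem exists_abs_overlap_le :
    ∃ C > 0, ∀ p q a : ℝ, 1 ≤ q → a ≤ |p - q| →
      |overlap N p q| ≤ C * exp (-(√2 / 2) * a) * q ^ (N - 1) := by
  obtain ⟨C, hC, hle⟩ := exists_abs_setIntegral_le hN (show 0 < √2 / 2 by positivity)
  refine ⟨C * 16, by positivity, fun p q a hq hpq => ?_⟩
  rw [mul_assoc C]
  exact hle q hq _ _ (by positivity) fun y _ => abs_w1_mul_w1_mul_Rr_le_of_le_abs_sub hpq y

theorem exists_sum_abs_overlap_le (k : ℕ) (B : ℝ) :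
    ∃ C > 0, ∀ e : ℝ, 0 ≤ e → ∀ p : ℕ → ℝ, Spaced k p e B → (∀ j ∈ Finset.Icc 1 k, 1 ≤ p j) →
      ∀ j ∈ Finset.Icc 1 k, ∑ i ∈ (Finset.Icc 1 k).erase j, |overlap N (p i) (p j)| ≤
        C * exp (-(√2 / 2) * e) * p j ^ (N - 1) := by
  obtain ⟨C, hC, hle⟩ := exists_abs_overlap_le hN
  refine ⟨(k + 1) * (C * exp (√2 / 2 * B)), by positivity, fun e he p hp hp1 j hj => ?_⟩
  have hpj := hp1 j hj
  have hterm : ∀ i ∈ (Finset.Icc 1 k).erase j, |overlap N (p i) (p j)| ≤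
      C * exp (√2 / 2 * B) * exp (-(√2 / 2) * e) * p j ^ (N - 1) := fun i hi => by
    obtain ⟨hij, hi⟩ := Finset.mem_erase.mp hi
    refine (hle _ _ _ hpj (hp.sub_le_abs_sub he hi hj hij)).trans_eq ?_
    rw [mul_assoc C (exp (√2 / 2 * B)), ← exp_add]
    ring_nf
  have hcard : (((Finset.Icc 1 k).erase j).card : ℝ) ≤ k + 1 := by
    have : ((Finset.Icc 1 k).erase j).card ≤ k := (Finset.card_erase_le).trans (by simp)
    exact_mod_cast this.trans k.le_succ
  refine (Finset.sum_le_card_nsmul _ _ _ hterm).trans ?_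
  rw [nsmul_eq_mul, mul_assoc, mul_assoc (k + 1 : ℝ)]
  refine (mul_le_mul_of_nonneg_right hcard (by positivity)).trans_eq ?_
  ring

theorem exists_sum_mul_overlap_eq (k : ℕ) (B : ℝ) :
    ∃ C > 0, ∀ᶠ e : ℝ in atTop, ∀ (p b : ℕ → ℝ) (K : ℝ), Spaced k p e B →
      (∀ j ∈ Finset.Icc 1 k, 1 ≤ p j) → (∀ j ∈ Finset.Icc 1 k, |b j| ≤ K * p j ^ (N - 1)) →
      ∃ d : ℕ → ℝ, (∀ j ∈ Finset.Icc 1 k,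
        ∑ i ∈ Finset.Icc 1 k, d i * overlap N (p i) (p j) = b j) ∧
        ∀ i ∈ Finset.Icc 1 k, |d i| ≤ C * K := by
  obtain ⟨c, hc, hdiag⟩ := exists_le_overlap_self hN
  obtain ⟨C, -, hoff⟩ := exists_sum_abs_overlap_le hN k B
  have hsmall : Tendsto (fun e : ℝ => C * exp (-(√2 / 2) * e)) atTop (𝓝 (C * 0)) :=
    (tendsto_exp_atBot.comp
      (tendsto_id.const_mul_atTop_of_neg (neg_neg_of_pos (by positivity)))).const_mul C
  rw [mul_zero] at hsmall
  refine ⟨(c / 2)⁻¹, by positivity, ?_⟩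
  filter_upwards [hsmall.eventually_le_const (half_pos hc), eventually_ge_atTop 0]
    with e hCe he p b K hp hp1 hb
  have hpow : ∀ j ∈ Finset.Icc 1 k, 0 < p j ^ (N - 1) := fun j hj => by
    have := hp1 j hj
    positivity
  refine exists_sum_mul_eq_of_diag_dominant (m := fun j => c / 2 * p j ^ (N - 1))
    (fun j hj => mul_pos (half_pos hc) (hpow j hj)) (fun j hj => ?_) fun j hj => ?_
  · have hoff_half := (hoff e he p hp hp1 j hj).trans
      (mul_le_mul_of_nonneg_right hCe (hpow j hj).le)
    simp only [Real.norm_eq_abs]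
    rw [abs_of_nonneg (overlap_nonneg N (p j) (p j))]
    linarith [hdiag (p j) (hp1 j hj)]
  · refine (hb j hj).trans_eq ?_
    field_simp

theorem exists_projection_solution {k : ℕ} (hk : Even k) {σ : ℝ} (hσ : 0 ≤ σ) (hσ2 : σ < √2)
    (B : ℝ) :
    ∃ C > 0, ∀ᶠ e : ℝ in atTop, ∀ (p v : ℕ → ℝ) (ψ g : ℝ → ℝ) (ε Ψ G : ℝ), 0 ≤ Ψ → 0 ≤ G →
      Spaced k p e B → (∀ j ∈ Finset.Icc 1 k, 1 ≤ p j) →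
      (∀ j ∈ Finset.Icc 1 k, |v j| + exp (-(√2 / 2) * e) + 1 / p j ≤ ε) →
      (∀ j ∈ Finset.Icc 1 k, ∀ y, 0 < y → |ψ y| ≤ Ψ * envelope σ e |Rr N y - p j|) →
      (∀ j ∈ Finset.Icc 1 k, ∀ y, 0 < y → |g y| ≤ G * envelope σ e |Rr N y - p j|) →
      ∃ d : ℕ → ℝ, (∀ j ∈ Finset.Icc 1 k, ∑ i ∈ Finset.Icc 1 k, d i * overlap N (p i) (p j) =
        projRhs N (multiProfile k p) (v j) (p j) ψ g) ∧
        ∀ i ∈ Finset.Icc 1 k, |d i| ≤ C * (exp (-σ * e) * (ε * Ψ + G)) := by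
  obtain ⟨C₁, hC₁, hrhs⟩ := exists_abs_projRhs_le hN hσ hσ2
    (show 0 < 6 * ((k : ℝ) + 2) ^ 2 * exp (√2 * B) by positivity)
  obtain ⟨C₂, hC₂, hsolve⟩ := exists_sum_mul_overlap_eq hN k B
  refine ⟨C₂ * C₁, by positivity, ?_⟩
  filter_upwards [hsolve, eventually_ge_atTop 0]
    with e hsolve he p v ψ g ε Ψ G hΨ hG hp hp1 hε hψ hg
  have hb : ∀ j ∈ Finset.Icc 1 k, |projRhs N (multiProfile k p) (v j) (p j) ψ g| ≤
      C₁ * (exp (-σ * e) * (ε * Ψ + G)) * p j ^ (N - 1) := fun j hj => by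
    have hpj := hp1 j hj
    refine (hrhs (p j) hpj e (v j) Ψ G ψ g _ hΨ hG (analyticAt_multiProfile k p)
      (abs_f1_multiProfile_sub_le hk hj he hp) (hψ j hj) (hg j hj)).trans ?_
    have := mul_le_mul_of_nonneg_right (hε j hj) hΨ
    gcongr
  obtain ⟨d, hd, hd_le⟩ := hsolve p _ _ hp hp1 hb
  exact ⟨d, hd, fun i hi => (hd_le i hi).trans_eq (by ring)⟩

end

/-! ### The moving interfaces -/

theorem SmallH.eventually_bounds {k : ℕ} {T₀ : ℝ} {h : ℕ → ℝ → ℝ} (hh : SmallH k T₀ h) :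
    ∀ᶠ t in atBot, ∀ j ∈ Finset.Icc 1 k,
      DifferentiableAt ℝ (h j) t ∧ |h j t| ≤ 1 ∧ |deriv (h j) t| ≤ logRatio t := by
  obtain ⟨hdiff, A, B, hAB, hA, hB⟩ := hh
  filter_upwards [eventually_le_atBot (-T₀), eventually_logRatio_mem_Ioc] with t ht hL j hj
  have hA0 : 0 ≤ A := (abs_nonneg _).trans (hA j hj t ht)
  have hBt : (logRatio t)⁻¹ * |deriv (h j) t| ≤ B := by
    rw [logRatio, inv_div]
    exact hB j hj t ht
  have hB0 : 0 ≤ B := le_trans (by have := hL.1; positivity) hBt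
  refine ⟨hdiff j hj t ht, (hA j hj t ht).trans (by linarith), ?_⟩
  simpa using (inv_mul_le_iff₀ hL.1).mp (hBt.trans (show B ≤ 1 by linarith))

theorem spaced_rho0 (N k : ℕ) (η : ℝ → ℝ) (γ : ℕ → ℝ) (t : ℝ) :
    Spaced k (fun j => rho0 N k η γ j t) (η t) (2 * ∑ i ∈ Finset.Icc 1 k, |γ i|) := by
  intro i hi j hj
  have habs : ∀ l ∈ Finset.Icc 1 k, |γ l| ≤ ∑ i ∈ Finset.Icc 1 k, |γ i| := fun l hl =>
    Finset.single_le_sum (f := fun i => |γ i|) (fun _ _ => abs_nonneg _) hl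
  calc _ = |γ i - γ j| := by simp only [rho0]; ring_nf
    _ ≤ |γ i| + |γ j| := abs_sub _ _
    _ ≤ _ := by linarith [habs i hi, habs j hj]

theorem abs_sub_rho0_le (N k : ℕ) (η : ℝ → ℝ) (γ : ℕ → ℝ) {h : ℕ → ℝ → ℝ} {j : ℕ} {t δ : ℝ}
    (hhj : |h j t| ≤ δ) (r : ℝ) :
    |r - rho0 N k η γ j t| ≤ |r - rho N k η γ h j t| + δ := by
  have := abs_sub_abs_le_abs_sub (r - rho0 N k η γ j t) (h j t)
  rw [sub_sub, ← rho] at this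
  linarith

theorem Spaced.add {k : ℕ} {q u : ℕ → ℝ} {e B δ : ℝ} (hq : Spaced k q e B)
    (hu : ∀ j ∈ Finset.Icc 1 k, |u j| ≤ δ) : Spaced k (fun j => q j + u j) e (B + 2 * δ) := by
  intro i hi j hj
  calc _ = |(q i - q j - ((i : ℝ) - j) * e) + (u i - u j)| := by ring_nf
    _ ≤ |q i - q j - ((i : ℝ) - j) * e| + (|u i| + |u j|) :=
      (abs_add_le _ _).trans (by gcongr; exact abs_sub _ _)
    _ ≤ _ := by linarith [hq i hi j hj, hu i hi, hu j hj]

theorem log_abs_isLittleO_sqrt_abs :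
    (fun t : ℝ => log |t|) =o[atBot] fun t => √|t| := by
  simp only [Real.sqrt_eq_rpow]
  exact (isLittleO_log_rpow_atTop (by norm_num)).comp_tendsto tendsto_abs_atBot_atTop

theorem sqrt_neg_two_mul (N : ℕ) {t : ℝ} (ht : t ≤ 0) :
    √(-2 * ((N : ℝ) - 1) * t) = √(2 * ((N : ℝ) - 1)) * √|t| := by
  rw [abs_of_nonpos ht, ← Real.sqrt_mul' _ (by linarith)]
  ring_nf

namespace Setting

variable {N k : ℕ} {η : ℝ → ℝ} {γ : ℕ → ℝ} (S : Setting N k η γ) {T₀ : ℝ} {h : ℕ → ℝ → ℝ}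
  (hh : SmallH k T₀ h) {j : ℕ} (hj : j ∈ Finset.Icc 1 k)
include S hh hj

theorem rho_isEquivalent :
    rho N k η γ h j ~[atBot] fun t => √(2 * ((N : ℝ) - 1)) * √|t| := by
  have hN := sub_one_pos_of_two_le S.hN
  have hh_one : h j =O[atBot] fun _ => (1 : ℝ) := .of_bound 1 <| by
    filter_upwards [hh.eventually_bounds] with t ht
    simpa using (ht j hj).2.1
  have hrest : (fun t => ((j : ℝ) - ((k : ℝ) + 1) / 2) * η t + γ j + h j t) =O[atBot]
      fun t => log |t| :=
    ((S.eta_isBigO_log.const_mul_left _).add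
      ((isBigO_const_const _ one_ne_zero _).trans one_isBigO_log_abs)).add
      (hh_one.trans one_isBigO_log_abs)
  refine ((hrest.trans_isLittleO log_abs_isLittleO_sqrt_abs).const_mul_right
    (by positivity)).congr' ?_ .rfl
  filter_upwards [eventually_le_atBot 0] with t ht
  rw [Pi.sub_apply, rho, rho0, sqrt_neg_two_mul N ht]
  ring

theorem tendsto_rho : Tendsto (rho N k η γ h j) atBot atTop := by
  have hN := sub_one_pos_of_two_le S.hN
  exact (S.rho_isEquivalent hh hj).symm.tendsto_atTop
    ((tendsto_sqrt_atTop.comp tendsto_abs_atBot_atTop).const_mul_atTop (by positivity))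

theorem inv_rho_isBigO : (fun t => (rho N k η γ h j t)⁻¹) =O[atBot]
    fun t => logRatio t ^ (1 / 2 : ℝ) := by
  refine (S.rho_isEquivalent hh hj).inv.isBigO.trans ?_
  refine (inv_sqrt_abs_isBigO.const_mul_left (√(2 * ((N : ℝ) - 1)))⁻¹).congr_left fun t => ?_
  exact (mul_inv _ _).symm

theorem deriv_rho_isBigO : deriv (rho N k η γ h j) =O[atBot]
    fun t => logRatio t ^ (1 / 2 : ℝ) := by
  have hN := sub_one_pos_of_two_le S.hN
  have hh' : deriv (h j) =O[atBot] logRatio := .of_bound' <| by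
    filter_upwards [hh.eventually_bounds] with t ht
    exact (ht j hj).2.2.trans (le_abs_self _)
  have hslow : (fun t => ((j : ℝ) - ((k : ℝ) + 1) / 2) * deriv η t + deriv (h j) t) =O[atBot]
      fun t => logRatio t ^ (1 / 2 : ℝ) :=
    ((S.deriv_eta_isBigO.const_mul_left _).add hh').trans (logRatio_isBigO_rpow (by norm_num))
  refine ((inv_sqrt_abs_isBigO.const_mul_left
    (-2 * ((N : ℝ) - 1) / (2 * √(2 * ((N : ℝ) - 1))))).add hslow).congr' ?_ .rfl
  filter_upwards [hh.eventually_bounds, eventually_le_atBot (-1)] with t ht ht1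
  have hpos : 0 < -2 * ((N : ℝ) - 1) * t := by nlinarith
  have hsqrt : HasDerivAt (fun t : ℝ => √(-2 * ((N : ℝ) - 1) * t))
      (-2 * ((N : ℝ) - 1) / (2 * √(-2 * ((N : ℝ) - 1) * t))) t := by
    simpa using ((hasDerivAt_id t).const_mul (-2 * ((N : ℝ) - 1))).sqrt hpos.ne'
  have hrho : HasDerivAt (rho N k η γ h j) _ t := ((hsqrt.add
    ((S.hηdiff t ht1).hasDerivAt.const_mul ((j : ℝ) - ((k : ℝ) + 1) / 2))).add_const (γ j)).add
    (ht j hj).1.hasDerivAt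
  rw [hrho.deriv, sqrt_neg_two_mul N (by linarith), ← mul_assoc 2, div_mul_eq_div_div]
  ring

omit hj in
theorem exists_eventually_error_le : ∃ D > 0, ∀ᶠ t in atBot, ∀ j ∈ Finset.Icc 1 k,
    |deriv (rho N k η γ h j) t| + exp (-(√2 / 2) * η t) + 1 / rho N k η γ h j t ≤
      D * logRatio t ^ (1 / 2 : ℝ) := by
  have hexp : (fun t => exp (-(√2 / 2) * η t)) =O[atBot] fun t => logRatio t ^ (1 / 2 : ℝ) := by
    convert S.exp_neg_mul_eta_isBigO (a := √2 / 2) (by positivity) using 3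
    field_simp
  have hsum : (fun t => ∑ j ∈ Finset.Icc 1 k, ‖|deriv (rho N k η γ h j) t| +
      exp (-(√2 / 2) * η t) + (rho N k η γ h j t)⁻¹‖) =O[atBot]
      fun t => logRatio t ^ (1 / 2 : ℝ) :=
    .fun_sum fun j hj => (((S.deriv_rho_isBigO hh hj).abs_left.add hexp).add
      (S.inv_rho_isBigO hh hj)).norm_left
  obtain ⟨D, hD, hbound⟩ := hsum.exists_pos
  refine ⟨D, hD, ?_⟩
  filter_upwards [hbound.bound, eventually_logRatio_mem_Ioc] with t ht hL j hj
  rw [Real.norm_of_nonneg (by have := hL.1; positivity : 0 ≤ logRatio t ^ (1 / 2 : ℝ))] at ht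
  rw [one_div (rho N k η γ h j t)]
  refine (le_abs_self _).trans (le_trans ?_ ((le_abs_self _).trans ht))
  exact Finset.single_le_sum (f := fun j => ‖|deriv (rho N k η γ h j) t| +
    exp (-(√2 / 2) * η t) + (rho N k η γ h j t)⁻¹‖) (fun _ _ => norm_nonneg _) hj

end Setting

/-! ### The weighted norm -/

namespace IsPhi

variable {N k : ℕ} {η : ℝ → ℝ} {γ : ℕ → ℝ} {σ : ℝ} {Φ : ℝ → ℝ → ℝ}
  (hΦ : IsPhi N k η γ σ Φ) (hk : 2 ≤ k)
include hΦ hk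

theorem CNorm_nonneg (hN : 2 ≤ N) (I : Set ℝ) (u : ℝ → ℝ → ℝ) : 0 ≤ CNorm N Φ I u := by
  refine Real.sSup_nonneg ?_
  rintro _ ⟨⟨t, y⟩, ⟨-, hy⟩, rfl⟩
  have := hΦ.pos hk (t := t) (one_lt_Rr hN hy)
  positivity

theorem abs_le_CNorm_mul (hN : 2 ≤ N) {I : Set ℝ} {u : ℝ → ℝ → ℝ}
    (hu : BddAbove (CSet N Φ I u)) {t y : ℝ} (ht : t ∈ I) (hy : 0 < y) :
    |u t y| ≤ CNorm N Φ I u * Φ t (Rr N y) := by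
  rw [← div_le_iff₀ (hΦ.pos hk (one_lt_Rr hN hy))]
  exact le_csSup hu ⟨(t, y), ⟨ht, hy⟩, rfl⟩

variable (hσ : 0 ≤ σ) {h : ℕ → ℝ → ℝ} {t r : ℝ} (hη : 0 ≤ η t) {j : ℕ}
  (hj : j ∈ Finset.Icc 1 k) (hhj : |h j t| ≤ 1) (hr : 1 < r)
include hσ hη hj hhj hr

theorem le_envelope_rho : Φ t r ≤ 2 * exp (σ * (4 * ∑ i ∈ Finset.Icc 1 k, |γ i| + 1)) *
    envelope σ (η t) |r - rho N k η γ h j t| := by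
  refine (hΦ.le_envelope hk hr hσ hη (spaced_rho0 N k η γ t) hj).trans ?_
  have hdist := abs_sub_rho0_le N k η γ hhj r
  have hmin : min |r - rho0 N k η γ j t| (η t / 2) ≤
      min |r - rho N k η γ h j t| (η t / 2) + 1 := by
    rw [← min_add_add_right]
    exact min_le_min hdist (by linarith)
  rw [mul_assoc 2 (exp _), envelope, envelope, ← exp_add, ← exp_add]
  refine mul_le_mul_of_nonneg_left (exp_le_exp.mpr ?_) two_pos.le
  linarith [mul_le_mul_of_nonneg_left hmin hσ]

theorem w1_div_le (hσ2 : σ ≤ √2) : w1 (r - rho N k η γ h j t) / Φ t r ≤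
    4 * exp (σ * (2 * ∑ i ∈ Finset.Icc 1 k, |γ i| + 1)) * exp (σ * η t) := by
  rw [div_le_iff₀ (hΦ.pos hk hr), mul_assoc, mul_assoc]
  refine (w1_le _).trans (mul_le_mul_of_nonneg_left ?_ (by norm_num))
  have hdist := abs_sub_rho0_le N k η γ hhj r
  calc exp (-√2 * |r - rho N k η γ h j t|) ≤ exp (-σ * |r - rho N k η γ h j t|) := by gcongr
    _ ≤ exp (σ * (2 * ∑ i ∈ Finset.Icc 1 k, |γ i| + 1)) * (exp (σ * η t) *
        exp (σ * (-η t - |r - rho0 N k η γ j t| - 2 * ∑ i ∈ Finset.Icc 1 k, |γ i|))) := by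
      rw [← exp_add, ← exp_add, exp_le_exp]
      linarith [mul_le_mul_of_nonneg_left hdist hσ]
    _ ≤ _ := by
      gcongr
      exact hΦ.exp_neg_le hk hr hσ hη (spaced_rho0 N k η γ t) hj

end IsPhi

/-! ### Estimates on the solution -/

theorem rpow_div_mul_rpow_half_le {L : ℝ} (hL : L ∈ Set.Ioc 0 1) {σ : ℝ} (hσ : 0 ≤ σ) :
    L ^ (σ / √2) * L ^ (1 / 2 : ℝ) ≤ L ^ ((√2 + σ) / (2 * √2)) := by
  rw [← Real.rpow_add hL.1]
  refine Real.rpow_le_rpow_of_exponent_ge hL.1 hL.2 ?_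
  have : (√2 + σ) / (2 * √2) = 1 / 2 + σ / √2 / 2 := by field_simp
  have : 0 ≤ σ / √2 := by positivity
  linarith

namespace Setting

variable {N k : ℕ} {η : ℝ → ℝ} {γ : ℕ → ℝ} (S : Setting N k η γ) {σ : ℝ} (hσ : 0 ≤ σ)
include S hσ

theorem exists_eventually_exp_mul_le : ∃ C > 0, ∀ᶠ t in atBot, ∀ Ψ G : ℝ, 0 ≤ Ψ → 0 ≤ G →
    exp (-σ * η t) * (logRatio t ^ (1 / 2 : ℝ) * Ψ + G) ≤
      C * logRatio t ^ ((√2 + σ) / (2 * √2)) * Ψ + C * logRatio t ^ (σ / √2) * G := by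
  obtain ⟨C, hC, hexp⟩ := (S.exp_neg_mul_eta_isBigO hσ).exists_pos
  refine ⟨C, hC, ?_⟩
  filter_upwards [hexp.bound, eventually_logRatio_mem_Ioc] with t ht hL Ψ G hΨ hG
  have hL0 := hL.1
  rw [Real.norm_of_nonneg (exp_pos _).le, Real.norm_of_nonneg (by positivity)] at ht
  calc _ ≤ C * logRatio t ^ (σ / √2) * (logRatio t ^ (1 / 2 : ℝ) * Ψ + G) := by gcongr
    _ = C * (logRatio t ^ (σ / √2) * logRatio t ^ (1 / 2 : ℝ)) * Ψ +
        C * logRatio t ^ (σ / √2) * G := by ring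
    _ ≤ _ := by
      gcongr
      exact rpow_div_mul_rpow_half_le hL hσ

variable (hσ2 : σ < √2) {T₀ : ℝ} {h : ℕ → ℝ → ℝ} (hh : SmallH k T₀ h) {Φ : ℝ → ℝ → ℝ}
  (hΦ : IsPhi N k η γ σ Φ)
include hσ2 hh hΦ

theorem exists_eventually_projSystem : ∃ C > 0, ∀ᶠ t in atBot, ∀ (ψ g : ℝ → ℝ → ℝ) (Ψ G : ℝ),
    0 ≤ Ψ → 0 ≤ G → (∀ y, 0 < y → |ψ t y| ≤ Ψ * Φ t (Rr N y)) →
    (∀ y, 0 < y → |g t y| ≤ G * Φ t (Rr N y)) →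
    ∃ d : ℕ → ℝ, ProjSystem N k (rho N k η γ h) (zfun N k η γ h) ψ g (fun i _ => d i) t ∧
      ∀ i ∈ Finset.Icc 1 k,
        |d i| ≤ C * (exp (-σ * η t) * (logRatio t ^ (1 / 2 : ℝ) * Ψ + G)) := by
  set M := 2 * exp (σ * (4 * ∑ i ∈ Finset.Icc 1 k, |γ i| + 1))
  obtain ⟨C, hC, hsolve⟩ := exists_projection_solution S.hN S.hkeven hσ hσ2
    (2 * ∑ i ∈ Finset.Icc 1 k, |γ i| + 2 * 1)
  obtain ⟨D, hD, herror⟩ := S.exists_eventually_error_le hh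
  have hone_le : ∀ᶠ t in atBot, ∀ j ∈ Finset.Icc 1 k, 1 ≤ rho N k η γ h j t :=
    (Finset.eventually_all _).mpr fun j hj => (S.tendsto_rho hh hj).eventually_ge_atTop 1
  refine ⟨C * M * (D + 1), by positivity, ?_⟩
  filter_upwards [S.tendsto_eta.eventually hsolve, herror, hone_le, hh.eventually_bounds,
    eventually_le_atBot (-1), eventually_logRatio_mem_Ioc]
    with t hsolve herror hone_le hh ht hL ψ g Ψ G hΨ hG hψ hg
  have henv : ∀ {u : ℝ → ℝ} {K : ℝ}, 0 ≤ K → (∀ y, 0 < y → |u y| ≤ K * Φ t (Rr N y)) →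
      ∀ j ∈ Finset.Icc 1 k, ∀ y, 0 < y →
        |u y| ≤ K * M * envelope σ (η t) |Rr N y - rho N k η γ h j t| :=
    fun hK hu j hj y hy => (hu y hy).trans <| by
      rw [mul_assoc]
      exact mul_le_mul_of_nonneg_left (hΦ.le_envelope_rho S.hk hσ (S.eta_nonneg ht) hj
        (hh j hj).2.1 (one_lt_Rr S.hN hy)) hK
  have hM : 0 ≤ M := by positivity
  obtain ⟨d, hd, hd_le⟩ := hsolve (fun j => rho N k η γ h j t)
    (fun j => deriv (rho N k η γ h j) t) (ψ t) (g t) _ _ _ (mul_nonneg hΨ hM) (mul_nonneg hG hM)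
    ((spaced_rho0 N k η γ t).add fun j hj => (hh j hj).2.1) hone_le herror (henv hΨ hψ) (henv hG hg)
  refine ⟨d, projSystem_iff.mpr hd, fun i hi => (hd_le i hi).trans ?_⟩
  have hL0 : 0 ≤ logRatio t ^ (1 / 2 : ℝ) := Real.rpow_nonneg hL.1.le _
  have hnonneg : 0 ≤ C * M * exp (-σ * η t) * (logRatio t ^ (1 / 2 : ℝ) * Ψ + D * G) := by
    positivity
  linarith

theorem exists_eventually_projSystem_estimates : ∃ c > 0, ∀ᶠ t in atBot,
    ∀ (ψ g : ℝ → ℝ → ℝ) (Ψ G : ℝ), 0 ≤ Ψ → 0 ≤ G →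
    (∀ y, 0 < y → |ψ t y| ≤ Ψ * Φ t (Rr N y)) → (∀ y, 0 < y → |g t y| ≤ G * Φ t (Rr N y)) →
    ∃ d : ℕ → ℝ, ProjSystem N k (rho N k η γ h) (zfun N k η γ h) ψ g (fun i _ => d i) t ∧
      ∀ i ∈ Finset.Icc 1 k,
        (|d i| ≤ c * logRatio t ^ ((√2 + σ) / (2 * √2)) * Ψ + c * logRatio t ^ (σ / √2) * G) ∧
        ∀ r, 1 < r → |d i * w1 (r - rho N k η γ h i t) / Φ t r| ≤
          c * logRatio t ^ (1 / 2 : ℝ) * Ψ + c * G := by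
  obtain ⟨C₁, hC₁, hsolve⟩ := S.exists_eventually_projSystem hσ hσ2 hh hΦ
  obtain ⟨C₂, hC₂, hexp⟩ := S.exists_eventually_exp_mul_le hσ
  set M := 4 * exp (σ * (2 * ∑ i ∈ Finset.Icc 1 k, |γ i| + 1))
  refine ⟨C₁ * (C₂ + M), by positivity, ?_⟩
  filter_upwards [hsolve, hexp, hh.eventually_bounds, eventually_le_atBot (-1),
    eventually_logRatio_mem_Ioc] with t hsolve hexp hh ht hL ψ g Ψ G hΨ hG hψ hg
  obtain ⟨d, hd, hd_le⟩ := hsolve ψ g Ψ G hΨ hG hψ hg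
  have hL0 := hL.1
  refine ⟨d, hd, fun i hi => ⟨?_, fun r hr => ?_⟩⟩
  · refine ((hd_le i hi).trans (mul_le_mul_of_nonneg_left (hexp Ψ G hΨ hG) hC₁.le)).trans ?_
    rw [mul_add, ← mul_assoc, ← mul_assoc, ← mul_assoc, ← mul_assoc]
    have : C₂ ≤ C₂ + M := le_add_of_nonneg_right (by positivity)
    gcongr
  · have hw1_div := hΦ.w1_div_le S.hk hσ (S.eta_nonneg ht) hi (hh i hi).2.1 hr hσ2.le
    have hΦ_pos := hΦ.pos S.hk (t := t) hr
    have hw1_pos := w1_pos (r - rho N k η γ h i t)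
    rw [mul_div_assoc, abs_mul, abs_of_pos (div_pos hw1_pos hΦ_pos)]
    calc _ ≤ C₁ * (exp (-σ * η t) * (logRatio t ^ (1 / 2 : ℝ) * Ψ + G)) *
          (M * exp (σ * η t)) := mul_le_mul (hd_le i hi) hw1_div (by positivity) (by positivity)
      _ = C₁ * M * (logRatio t ^ (1 / 2 : ℝ) * Ψ + G) := by
        rw [neg_mul, exp_neg]
        field_simp
      _ ≤ C₁ * (C₂ + M) * (logRatio t ^ (1 / 2 : ℝ) * Ψ + G) := by
        gcongr
        exact le_add_of_nonneg_left hC₂.le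
      _ = _ := by ring

end Setting

theorem stmt_8_general {N k : ℕ} {η : ℝ → ℝ} {γ : ℕ → ℝ} (S : Setting N k η γ) {σ : ℝ}
    (hσ : σ ∈ Set.Ico 0 √2) {T₀ : ℝ} {h : ℕ → ℝ → ℝ} (hh : SmallH k T₀ h) {Φ : ℝ → ℝ → ℝ}
    (hΦ : IsPhi N k η γ σ Φ) :
    ∃ T > 2, ∃ c > 0, ∀ I : Set ℝ, ∀ g ψ : ℝ → ℝ → ℝ,
      BddAbove (CSet N Φ I g) → BddAbove (CSet N Φ I ψ) →
      ∃ d : ℕ → ℝ → ℝ,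
        (∀ t ∈ I ∩ Set.Iic (-T), ProjSystem N k (rho N k η γ h) (zfun N k η γ h) ψ g d t) ∧
        ∀ i ∈ Finset.Icc 1 k, ∀ t ≤ -T,
          (|d i t| ≤ c * (log |t| / |t|) ^ ((√2 + σ) / (2 * √2)) * CNorm N Φ I ψ +
            c * (log |t| / |t|) ^ (σ / √2) * CNorm N Φ I g) ∧
          ∀ r, 1 < r → |d i t * w1 (r - rho N k η γ h i t) / Φ t r| ≤
            c * (log |t| / |t|) ^ (1 / 2 : ℝ) * CNorm N Φ I ψ + c * CNorm N Φ I g := by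
  obtain ⟨c, hc, hsolve⟩ := S.exists_eventually_projSystem_estimates hσ.1 hσ.2 hh hΦ
  obtain ⟨a, ha⟩ := eventually_atBot.mp (hsolve.and eventually_logRatio_mem_Ioc)
  refine ⟨max 3 (-a), lt_max_of_lt_left (by norm_num), c, hc, fun I g ψ hg hψ => ?_⟩
  have hCNorm := hΦ.CNorm_nonneg S.hk S.hN I
  have hCg := hCNorm g
  have hCψ := hCNorm ψ
  have hpointwise : ∀ t ≤ -max 3 (-a), ∃ d : ℕ → ℝ,
      (t ∈ I → ProjSystem N k (rho N k η γ h) (zfun N k η γ h) ψ g (fun i _ => d i) t) ∧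
      ∀ i ∈ Finset.Icc 1 k,
        (|d i| ≤ c * logRatio t ^ ((√2 + σ) / (2 * √2)) * CNorm N Φ I ψ +
          c * logRatio t ^ (σ / √2) * CNorm N Φ I g) ∧
        ∀ r, 1 < r → |d i * w1 (r - rho N k η γ h i t) / Φ t r| ≤
          c * logRatio t ^ (1 / 2 : ℝ) * CNorm N Φ I ψ + c * CNorm N Φ I g := by
    intro t ht
    obtain ⟨hsolve, hL, -⟩ := ha t (by linarith [le_max_right 3 (-a)])
    by_cases htI : t ∈ I
    · obtain ⟨d, hd, hd_le⟩ := hsolve ψ g _ _ hCψ hCg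
        (fun _ => hΦ.abs_le_CNorm_mul S.hk S.hN hψ htI)
        (fun _ => hΦ.abs_le_CNorm_mul S.hk S.hN hg htI)
      exact ⟨d, fun _ => hd, hd_le⟩
    · refine ⟨0, fun h => absurd h htI, fun i _ => ⟨?_, fun r _ => ?_⟩⟩ <;>
      · simp only [Pi.zero_apply, zero_mul, zero_div, abs_zero]
        positivity
  choose! d hd using hpointwise
  exact ⟨fun i t => d t i, fun t ht => (hd t ht.2).1 ht.1, fun i hi t ht => (hd t ht).2 i hi⟩

/-- **Solvability of the nearly diagonal projection system and estimates on `d_i`.** -/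
theorem stmt_8 (N k : ℕ) (η : ℝ → ℝ) (γ : ℕ → ℝ) (S : Setting N k η γ)
    (σ : ℝ) (hσ : σ ∈ Set.Ioo 0 (Real.sqrt 2))
    (h : ℕ → ℝ → ℝ) (hh : SmallH k 2 h)
    (Φ : ℝ → ℝ → ℝ) (hΦ : IsPhi N k η γ σ Φ) :
    ∃ T > (2 : ℝ), ∃ c > (0 : ℝ), ∀ s : ℝ, s < -T → ∀ g ψ : ℝ → ℝ → ℝ,
      ContinuousOn (fun p : ℝ × ℝ => g p.1 p.2) (Set.Ioo s (-T) ×ˢ Set.Ioi (0 : ℝ)) →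
      BddAbove (CSet N Φ (Set.Ioo s (-T)) g) →
      BddAbove (CSet N Φ (Set.Ioo s (-T)) ψ) →
      ∃ d : ℕ → ℝ → ℝ,
        (∀ t ∈ Set.Ioo s (-T),
          ProjSystem N k (rho N k η γ h) (zfun N k η γ h) ψ g d t) ∧
        ∀ i ∈ Finset.Icc 1 k, ∀ t ∈ Set.Icc s (-T),
          (|d i t| ≤
            c * (Real.log |t| / |t|) ^ ((Real.sqrt 2 + σ) / (2 * Real.sqrt 2)) *
              CNorm N Φ (Set.Ioo s (-T)) ψ +
            c * (Real.log |t| / |t|) ^ (σ / Real.sqrt 2) *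
              CNorm N Φ (Set.Ioo s (-T)) g) ∧
          ∀ r : ℝ, 1 < r →
            |d i t * w1 (r - rho N k η γ h i t) / Φ t r| ≤
              c * (Real.log |t| / |t|) ^ ((1 : ℝ) / 2) * CNorm N Φ (Set.Ioo s (-T)) ψ +
              c * CNorm N Φ (Set.Ioo s (-T)) g := by
  obtain ⟨T, hT, c, hc, hsolve⟩ := stmt_8_general S (Set.Ioo_subset_Ico_self hσ) hh hΦ
  refine ⟨T, hT, c, hc, fun s _ g ψ _ hg hψ => ?_⟩
  obtain ⟨d, hd, hd_le⟩ := hsolve _ g ψ hg hψ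
  exact ⟨d, fun t ht => hd t ⟨ht, ht.2.le⟩, fun i hi t ht => hd_le i hi t ht.2⟩
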